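/- arXiv:math/0011270 — 5 statements merged into one kernel-verified Lean document; each statement's English description precedes it below -/
import Mathlib

section
/- Let ℓ be a prime, q a power of ℓ, and V a vector space of dimension 2n over F_q with a nondegenerate alternating bilinear form. Suppose a finite ℓ-group H acts F_q-linearly on V preserving the form (e(hv, hw) = e(v,w) for all h ∈ H, v, w ∈ V). Then there exists a maximal isotropic subspace W of V (W = W^⊥) that is stable under the action of H. -/
/-!
Every stable isotropic subspace `W` with `W ≠ W^⊥` can be enlarged, so one that is maximal among
the stable isotropic subspaces satisfies `W = W^⊥`. Indeed `W^⊥ / W` is then a nonzero finite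
`F`-vector space on which the `ℓ`-group `H` acts, and in characteristic `ℓ` such an action has a
nonzero fixed vector (`exists_fixed_ne_zero`), because the number of fixed vectors is divisible
by `ℓ` and `0` is one of them. If `x ∈ W^⊥ \ W` lifts a fixed vector, then `W + F x` is again
stable, and it is isotropic because the form is alternating (`exists_larger`).
-/

/-- An `ℓ`-group acting linearly on a nonzero finite vector space over a field of
`ℓ`-power order fixes a nonzero vector. -/
theorem exists_fixed_ne_zero {ℓ k m : ℕ} (hℓ : ℓ.Prime) (hk : 0 < k)
    {F M H : Type} [Field F] [Finite F] (hF : Nat.card F = ℓ ^ k)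
    [AddCommGroup M] [Module F M] [FiniteDimensional F M] [Nontrivial M]
    [Group H] (hH : Nat.card H = ℓ ^ m) (σ : H →* Module.End F M) :
    ∃ x : M, x ≠ 0 ∧ ∀ h, σ h x = x := by
  have : Fact ℓ.Prime := ⟨hℓ⟩
  have : Finite M := Module.finite_of_finite F
  let : MulAction H M := MulAction.compHom M σ
  have hdvd : ℓ ∣ Nat.card M := by
    rw [Module.natCard_eq_pow_finrank (K := F), hF, ← pow_mul]
    exact dvd_pow_self _ (Nat.mul_pos hk Module.finrank_pos).ne'
  have h0 : (0 : M) ∈ MulAction.fixedPoints H M := fun h => map_zero (σ h)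
  obtain ⟨x, hx, hne⟩ :=
    (IsPGroup.of_card hH).exists_fixed_point_of_prime_dvd_card_of_fixed_point M hdvd h0
  exact ⟨x, hne.symm, fun h => hx h⟩

/-- A stable isotropic subspace `W` whose orthogonal complement contains a vector outside `W` is
properly contained in another stable isotropic subspace. -/
theorem exists_larger {ℓ k m : ℕ} (hℓ : ℓ.Prime) (hk : 0 < k)
    {F V H : Type} [Field F] [Finite F] (hF : Nat.card F = ℓ ^ k)
    [AddCommGroup V] [Module F V] [FiniteDimensional F V]
    (B : V →ₗ[F] V →ₗ[F] F) (halt : B.IsAlt)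
    [Group H] (hH : Nat.card H = ℓ ^ m) (ρ : H →* (V ≃ₗ[F] V))
    (hρ : ∀ (h : H) (v w : V), B (ρ h v) (ρ h w) = B v w)
    (W : Submodule F V) (hiso : ∀ v ∈ W, ∀ w ∈ W, B v w = 0)
    (hst : ∀ h : H, ∀ v ∈ W, ρ h v ∈ W)
    (v₀ : V) (hv₀ : ∀ w ∈ W, B w v₀ = 0) (hv₀W : v₀ ∉ W) :
    ∃ W' : Submodule F V, W < W' ∧ (∀ v ∈ W', ∀ w ∈ W', B v w = 0) ∧
      ∀ h : H, ∀ v ∈ W', ρ h v ∈ W' := by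
  let U : Submodule F V := W.orthogonalBilin B
  have hU : ∀ x, x ∈ U ↔ ∀ w ∈ W, B w x = 0 := fun x => Iff.rfl
  have hstU : ∀ h : H, ∀ v ∈ U, ρ h v ∈ U := by
    intro h v hv
    rw [hU] at hv ⊢
    intro w hw
    have h1 := hρ h (ρ h⁻¹ w) v
    have h2 : ρ h (ρ h⁻¹ w) = w := by
      rw [← LinearEquiv.mul_apply, ← map_mul, mul_inv_cancel, map_one, LinearEquiv.coe_one, id]
    rw [h2] at h1
    rw [h1]
    exact hv _ (hst _ _ hw)
  let N : Submodule F U := W.comap U.subtype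
  let σ : H →* Module.End F (U ⧸ N) :=
    { toFun := fun h => N.mapQ N ((ρ h : V →ₗ[F] V).restrict (hstU h))
        (fun x hx => hst h x hx)
      map_one' := by
        ext x
        simp [LinearMap.restrict_apply]
      map_mul' := by
        intro a b
        ext x
        simp [LinearMap.restrict_apply]
        rfl }
  have : Nontrivial (U ⧸ N) :=
    ⟨N.mkQ ⟨v₀, hv₀⟩, 0, fun h => hv₀W (by simpa [N] using h)⟩
  obtain ⟨y, hy, hfix⟩ := exists_fixed_ne_zero hℓ hk hF hH σ
  obtain ⟨⟨x, hxU⟩, rfl⟩ := N.mkQ_surjective y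
  have hxW : x ∉ W := fun h => hy (by simpa [N] using h)
  have hdiff : ∀ h, ρ h x - x ∈ W := fun h => (Submodule.Quotient.eq N).1 (hfix h)
  rw [hU] at hxU
  have hxU' : ∀ w ∈ W, B x w = 0 := fun w hw => by rw [← halt.neg, hxU w hw, neg_zero]
  refine ⟨W ⊔ F ∙ x, ?_, ?_, ?_⟩
  · exact left_lt_sup.2 fun h => hxW (h (Submodule.mem_span_singleton_self x))
  · intro v hv w hw
    obtain ⟨a, ha, _, hb, rfl⟩ := Submodule.mem_sup.1 hv
    obtain ⟨c, hc, _, hd, rfl⟩ := Submodule.mem_sup.1 hw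
    obtain ⟨s, rfl⟩ := Submodule.mem_span_singleton.1 hb
    obtain ⟨t, rfl⟩ := Submodule.mem_span_singleton.1 hd
    simp [hiso a ha c hc, hxU a ha, hxU' c hc, halt x]
  · intro h v hv
    obtain ⟨a, ha, _, hb, rfl⟩ := Submodule.mem_sup.1 hv
    obtain ⟨s, rfl⟩ := Submodule.mem_span_singleton.1 hb
    refine Submodule.mem_sup.2 ⟨ρ h a + s • (ρ h x - x),
      W.add_mem (hst h a ha) (W.smul_mem s (hdiff h)), s • x,
      Submodule.smul_mem _ _ (Submodule.mem_span_singleton_self x), ?_⟩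
    rw [map_add, map_smul, smul_sub]
    abel

/-- If a finite `ℓ`-group `H` acts linearly on a symplectic space `V` of dimension `2n`
over a finite field of `ℓ`-power order, preserving the symplectic form, then there is a
maximal isotropic subspace of `V` stable under `H`. -/
theorem exists_stable_maximal_isotropic_subspace
    (ℓ : ℕ) (hℓ : ℓ.Prime) (q n : ℕ) (hq : ∃ k : ℕ, 0 < k ∧ q = ℓ ^ k)
    (F : Type) [Field F] [Fintype F] (hF : Fintype.card F = q)
    (V : Type) [AddCommGroup V] [Module F V] [FiniteDimensional F V]
    (hdim : Module.finrank F V = 2 * n)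
    (B : V →ₗ[F] V →ₗ[F] F)
    (halt : ∀ v : V, B v v = 0)
    (hnd : ∀ v : V, (∀ w : V, B v w = 0) → v = 0)
    (H : Type) [Group H] [Finite H] (hH : ∃ m : ℕ, Nat.card H = ℓ ^ m)
    (ρ : H →* (V ≃ₗ[F] V))
    (hρ : ∀ (h : H) (v w : V), B (ρ h v) (ρ h w) = B v w) :
    ∃ W : Submodule F V,
      (W : Set V) = {v : V | ∀ w ∈ W, B v w = 0} ∧ ∀ (h : H), ∀ v ∈ W, ρ h v ∈ W := by
  obtain ⟨k, hk, rfl⟩ := hq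
  obtain ⟨m, hm⟩ := hH
  have hF' : Nat.card F = ℓ ^ k := by rw [Nat.card_eq_fintype_card, hF]
  have hB : B.IsAlt := halt
  let P : Set (Submodule F V) :=
    {W | (∀ v ∈ W, ∀ w ∈ W, B v w = 0) ∧ ∀ h : H, ∀ v ∈ W, ρ h v ∈ W}
  have hbot : (⊥ : Submodule F V) ∈ P := by
    simp [P]
  obtain ⟨W, ⟨hiso, hst⟩, hmax⟩ :=
    WellFounded.has_min (wellFounded_gt (α := Submodule F V)) P ⟨⊥, hbot⟩
  refine ⟨W, Set.Subset.antisymm (fun v hv w hw => hiso v hv w hw) fun v hv => ?_, hst⟩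
  by_contra hvW
  obtain ⟨W', hlt, hW'⟩ := exists_larger hℓ hk hF' B hB hm ρ hρ W hiso hst v
    (fun w hw => by rw [← hB.neg, hv w hw, neg_zero]) hvW
  exact hmax W' hW' hlt
end

section
/- Let K be a number field that is a Galois extension of ℚ with abelian Galois group, and suppose every odd prime number is unramified in K (i.e., K/ℚ is unramified outside 2). Then the degree [K : ℚ] is a power of 2. In particular, there is no non-trivial abelian extension of ℚ of odd degree unramified outside 2. -/
/-!
If the degree is not a power of `2`, the abelian Galois group has a subgroup of odd prime index
(`exists_index_odd_prime`), so `K` contains a Galois extension `F / ℚ` of odd prime degree `p`,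
again unramified outside `2` (`squarefree_of_algebra`). By Hermite–Minkowski `F` is ramified
at `2`, and `e f g = p` forces `e = p` and `f = g = 1`: there is a unique prime `P` above `2`, it
is stable under the Galois group, and its residue field is `𝔽₂`.

Such an `F` cannot exist because tame ramification at `P` would need a nontrivial character of the
Galois group into `𝔽₂ˣ = 1`. Concretely, for `σ` of odd order, `σ` acts trivially on `P / P ^ 2`
because this group has only one nonzero element, and therefore acts trivially on all
`P ^ n / P ^ (n + 1)`. As the order of `σ` is prime to `2`, induction on `n` gives
`σ x - x ∈ P ^ n` for all `n`, so `σ = 1` (`eq_self_of_odd_order`).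
-/

open NumberField

lemma map_mem_pow {R : Type*} [CommRing R] {P : Ideal R} {σ : R →+* R}
    (hσP : ∀ x ∈ P, σ x ∈ P) (n : ℕ) {x : R} (hx : x ∈ P ^ n) : σ x ∈ P ^ n := by
  have h : P.map σ ≤ P := Ideal.map_le_iff_le_comap.mpr hσP
  have h2 := Ideal.mem_map_of_mem σ hx
  rw [Ideal.map_pow] at h2
  exact Ideal.pow_right_mono h n h2

/-- An endomorphism of odd order preserving a prime `P` with residue field `𝔽₂` acts trivially
modulo `P ^ 2`: it fixes the unique nonzero class of the one-dimensional `𝔽₂`-space `P / P ^ 2`,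
and every element of `R` is congruent to `0` or `1` modulo `P`. -/
lemma map_sub_self_mem_sq {R : Type*} [CommRing R] [IsDedekindDomain R]
    {P : Ideal R} [P.IsPrime] (hP : P ≠ ⊥) (hres : ∀ x : R, x ∈ P ∨ x - 1 ∈ P)
    {σ : R →+* R} (hσP : ∀ x ∈ P, σ x ∈ P) {m : ℕ} (hm : Odd m) (hσ : ∀ x, σ^[m] x = x)
    (x : R) : σ x - x ∈ P ^ 2 := by
  have key : ∀ c ∈ P, σ c - c ∈ P ^ 2 := by
    intro c hc
    by_cases hc2 : c ∈ P ^ 2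
    · exact sub_mem (map_mem_pow hσP 2 hc2) hc2
    have hσc2 : σ c ∉ P ^ 2 := by
      intro h
      have hit : ∀ j : ℕ, σ^[j + 1] c ∈ P ^ 2 := by
        intro j
        induction j with
        | zero => simpa using h
        | succ j ih =>
          rw [Function.iterate_succ_apply']
          exact map_mem_pow hσP 2 ih
      obtain ⟨t, rfl⟩ := hm
      exact hc2 (hσ c ▸ hit (2 * t))
    obtain ⟨d, e, he, hde⟩ := Ideal.exists_mul_add_mem_pow_succ (i := 1) hP c (σ c)
      (by simpa using hc) hc2 (by simpa using hσP c hc)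
    rcases hres d with hd | hd
    · refine absurd ?_ hσc2
      rw [← hde, sq]
      exact add_mem (Ideal.mul_mem_mul hc hd) (by simpa [sq] using he)
    · have : σ c - c = c * (d - 1) + e := by rw [← hde]; ring
      rw [this, sq]
      exact add_mem (Ideal.mul_mem_mul hc hd) (by simpa [sq] using he)
  rcases hres x with hx | hx
  · exact key x hx
  · simpa using key _ hx

/-- If `σ` acts trivially modulo `P ^ 2`, it acts trivially on every `P ^ n / P ^ (n + 1)`, by the
twisted Leibniz rule `σ (y * z) - y * z = (σ y - y) * σ z + y * (σ z - z)`. -/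
lemma map_sub_self_mem_pow_succ {R : Type*} [CommRing R] {P : Ideal R} {σ : R →+* R}
    (hσP : ∀ x ∈ P, σ x ∈ P) (h2 : ∀ x, σ x - x ∈ P ^ 2) (n : ℕ) {x : R} (hx : x ∈ P ^ n) :
    σ x - x ∈ P ^ (n + 1) := by
  induction n generalizing x with
  | zero => exact Ideal.pow_le_pow_right (by norm_num) (h2 x)
  | succ n ih =>
    rw [pow_succ] at hx
    induction hx using Submodule.mul_induction_on' with
    | mem_mul_mem y hy z hz =>
      have : σ (y * z) - y * z = (σ y - y) * σ z + y * (σ z - z) := by rw [map_mul]; ring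
      rw [this]
      refine add_mem ?_ ?_
      · rw [pow_succ]
        exact Ideal.mul_mem_mul (ih hy) (hσP z hz)
      · rw [add_assoc, pow_add]
        exact Ideal.mul_mem_mul hy (h2 z)
    | add a _ b _ ha hb =>
      have : σ (a + b) - (a + b) = (σ a - a) + (σ b - b) := by rw [map_add]; ring
      rw [this]
      exact add_mem ha hb

/-- The first ramification group at a prime above `2` has no element of odd order; since the
residue field is `𝔽₂`, this first ramification group is the whole decomposition group. -/
lemma eq_self_of_odd_order {R : Type*} [CommRing R] [IsDedekindDomain R]
    {P : Ideal R} [P.IsPrime] (hP : P ≠ ⊥) (hP2 : (2 : R) ∈ P)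
    (hres : ∀ x : R, x ∈ P ∨ x - 1 ∈ P)
    {σ : R →+* R} (hσP : ∀ x ∈ P, σ x ∈ P) {m : ℕ} (hm : Odd m) (hσ : ∀ x, σ^[m] x = x)
    (x : R) : σ x = x := by
  have h2 := map_sub_self_mem_sq hP hres hσP hm hσ
  have hall : ∀ n : ℕ, σ x - x ∈ P ^ n := by
    intro n
    induction n with
    | zero => simp
    | succ n ih =>
      -- Modulo `P ^ (n + 1)` iterating `σ` just adds `σ x - x` repeatedly; at `j = m` this gives
      -- `m * (σ x - x) ∈ P ^ (n + 1)`, and `m` is odd while `2 ∈ P`.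
      have tel : ∀ j : ℕ, σ^[j] x - x - j * (σ x - x) ∈ P ^ (n + 1) := by
        intro j
        induction j with
        | zero => simp
        | succ j ihj =>
          have : σ^[j + 1] x - x - ((j + 1 : ℕ) : R) * (σ x - x) =
              σ (σ^[j] x - x - j * (σ x - x)) + j * (σ (σ x - x) - (σ x - x)) := by
            rw [Function.iterate_succ_apply']
            simp only [map_sub, map_mul, map_natCast]
            push_cast
            ring
          rw [this]
          exact add_mem (map_mem_pow hσP _ ihj)
            (Ideal.mul_mem_left _ _ (map_sub_self_mem_pow_succ hσP h2 n ih))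
      obtain ⟨t, rfl⟩ := hm
      have h := tel (2 * t + 1)
      rw [hσ] at h
      have h' : 2 * (σ x - x) ∈ P ^ (n + 1) := by
        rw [pow_succ']
        exact Ideal.mul_mem_mul hP2 ih
      have : σ x - x = -(x - x - ((2 * t + 1 : ℕ) : R) * (σ x - x)) - t * (2 * (σ x - x)) := by
        push_cast
        ring
      rw [this]
      exact sub_mem (neg_mem h) (Ideal.mul_mem_left _ _ h')
  have hbot := Ideal.iInf_pow_eq_bot_of_isDomain P (Ideal.IsPrime.ne_top ‹_›)
  have : σ x - x ∈ (⊥ : Ideal R) := hbot ▸ (Submodule.mem_iInf _).mpr hall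
  exact sub_eq_zero.mp this

/-- The subgroup is a maximal one containing the Sylow `2`-subgroup. -/
lemma exists_index_odd_prime {G : Type*} [CommGroup G] [Finite G]
    (h : ¬ ∃ k, Nat.card G = 2 ^ k) : ∃ H : Subgroup G, H.index.Prime ∧ Odd H.index := by
  obtain ⟨S⟩ : Nonempty (Sylow 2 G) := inferInstance
  have hS : (S : Subgroup G) ≠ ⊤ := by
    intro hS
    obtain ⟨k, hk⟩ := IsPGroup.iff_card.mp S.2
    refine h ⟨k, ?_⟩
    rw [← hk, ← Subgroup.card_top, ← hS]
  obtain ⟨H, hH, hSH⟩ := (eq_top_or_exists_le_coatom (S : Subgroup G)).resolve_left hS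
  refine ⟨H, ?_, ?_⟩
  · have : Nontrivial (G ⧸ H) := QuotientGroup.nontrivial_iff.mpr hH.1
    have : IsSimpleGroup (G ⧸ H) := ⟨fun N _ ↦ by
      have hle : H ≤ N.comap (QuotientGroup.mk' H) := by
        intro x hx
        have : (QuotientGroup.mk' H) x = 1 := by simpa using hx
        simp only [Subgroup.mem_comap, this, one_mem]
      have hN := Subgroup.map_comap_eq_self_of_surjective (QuotientGroup.mk'_surjective H) N
      rcases eq_or_ne (N.comap (QuotientGroup.mk' H)) ⊤ with ht | ht
      · right
        rw [← hN, ht, ← MonoidHom.range_eq_map]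
        exact MonoidHom.range_eq_top.mpr (QuotientGroup.mk'_surjective H)
      · left
        have : N.comap (QuotientGroup.mk' H) = H :=
          (hle.antisymm (by_contra fun hlt ↦ ht (hH.2 _ (lt_of_le_not_ge hle hlt)))).symm
        rw [← hN, this, QuotientGroup.map_mk'_self]⟩
    exact CommGroup.is_simple_iff_prime_card.mp this
  · rw [← Nat.not_even_iff_odd, even_iff_two_dvd]
    exact fun hdvd ↦ S.not_dvd_index (hdvd.trans (Subgroup.index_dvd_of_le hSH))

/-- A prime unramified in a number field is unramified in every subfield. -/
lemma squarefree_of_algebra {F K : Type*} [Field F] [NumberField F] [Field K] [NumberField K]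
    [Algebra F K] {p : ℕ} (h : Squarefree (Ideal.span {(p : 𝓞 K)})) :
    Squarefree (Ideal.span {(p : 𝓞 F)}) := by
  intro I hI
  have hmap := map_dvd (Ideal.mapHom (algebraMap (𝓞 F) (𝓞 K))) hI
  simp only [map_mul, Ideal.mapHom_apply, Ideal.map_span, Set.image_singleton, map_natCast] at hmap
  have hu := h _ hmap
  rw [Ideal.isUnit_iff] at hu ⊢
  by_contra hI'
  obtain ⟨M, hM, hIM⟩ := Ideal.exists_le_maximal I hI'
  obtain ⟨Q, hQ, hQM⟩ := Ideal.exists_maximal_ideal_liesOver_of_isIntegral (S := 𝓞 K) M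
  refine hQ.ne_top (top_le_iff.mp (hu ▸ ?_))
  refine Ideal.map_le_iff_le_comap.mpr (hIM.trans ?_)
  exact (Ideal.over_def Q M).le

/-- By Hermite–Minkowski some prime ramifies in `F ≠ ℚ`, and by assumption it can only be `2`. -/
lemma ramificationIdx_ne_one_of_two_mem {F : Type*} [Field F] [NumberField F] [IsGalois ℚ F]
    (hF : 1 < Module.finrank ℚ F)
    (hram : ∀ p : ℕ, p.Prime → p ≠ 2 → Squarefree (Ideal.span {(p : 𝓞 F)})) :
    ∀ P : Ideal (𝓞 F), P.IsPrime → (2 : 𝓞 F) ∈ P → P.ramificationIdx ℤ ≠ 1 := by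
  obtain ⟨q, hq, hqP⟩ := NumberField.exists_not_isUnramifiedAt_int_of_isGalois (𝒪 := 𝓞 F) hF
  have hqZ : Prime (q : ℤ) := Nat.prime_iff_prime_int.mp hq
  obtain rfl : q = 2 := by
    by_contra hq2
    have : (Ideal.span {(q : ℤ)}).IsMaximal :=
      ((Ideal.span_singleton_prime hqZ.ne_zero).mpr hqZ).isMaximal (by simpa using hqZ.ne_zero)
    obtain ⟨Q, hQ, hQM⟩ := Ideal.exists_maximal_ideal_liesOver_of_isIntegral (S := 𝓞 F)
      (Ideal.span {(q : ℤ)})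
    have hle : (Ideal.span {(q : ℤ)}).map (algebraMap ℤ (𝓞 F)) ≤ Q :=
      Ideal.map_le_iff_le_comap.mpr (Ideal.over_def Q _).le
    have hmap : (Ideal.span {(q : ℤ)}).map (algebraMap ℤ (𝓞 F)) = Ideal.span {(q : 𝓞 F)} := by
      simp [Ideal.map_span]
    have hqQ : (q : 𝓞 F) ∈ Q := by
      rw [hmap] at hle
      exact hle (Ideal.mem_span_singleton_self _)
    refine hqP Q hQ.isPrime hqQ (Ideal.ramificationIdx_eq_one_iff.mp ?_)
    rw [← Ideal.ramificationIdx'_eq_ramificationIdx (Ideal.span {(q : ℤ)}) Q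
      (by simpa using hqZ.ne_zero)]
    by_contra hne
    have h2 := (Ideal.ramificationIdx'_ne_one_iff hle).mp hne
    rw [hmap, ← Ideal.dvd_iff_le, sq] at h2
    exact hQ.ne_top (Ideal.isUnit_iff.mp (hram q hq hq2 Q h2))
  intro P hP h2 h
  exact hqP P hP (by exact_mod_cast h2) (Ideal.ramificationIdx_eq_one_iff.mp h)

open scoped Pointwise in
/-- A Galois extension of `ℚ` unramified outside `2` does not have odd prime degree: it would be
totally ramified at `2`, so its Galois group would be the decomposition group of a prime with
residue field `𝔽₂`, which has no nontrivial element of odd order. -/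
lemma finrank_not_odd_prime {F : Type*} [Field F] [NumberField F] [IsGalois ℚ F]
    (hp : (Module.finrank ℚ F).Prime) (hodd : Odd (Module.finrank ℚ F))
    (hram : ∀ p : ℕ, p.Prime → p ≠ 2 → Squarefree (Ideal.span {(p : 𝓞 F)})) : False := by
  set p := Module.finrank ℚ F with hpdef
  have h2Z : Prime (2 : ℤ) := Int.prime_two
  have : (Ideal.span {(2 : ℤ)}).IsMaximal :=
    ((Ideal.span_singleton_prime h2Z.ne_zero).mpr h2Z).isMaximal (by simp)
  obtain ⟨P, hP, hPM⟩ := Ideal.exists_maximal_ideal_liesOver_of_isIntegral (S := 𝓞 F)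
      (Ideal.span {(2 : ℤ)})
  have hP2 : (2 : 𝓞 F) ∈ P := by
    have := (Ideal.over_def P (Ideal.span {(2 : ℤ)})).le (Ideal.mem_span_singleton_self _)
    simpa using this
  have hP0 : P ≠ ⊥ := by
    rintro rfl
    simp at hP2
  have hcard : Nat.card Gal(F/ℚ) = p := IsGalois.card_aut_eq_finrank ℚ F
  have he := ramificationIdx_ne_one_of_two_mem hp.one_lt hram P hP.isPrime hP2
  -- In `g * (e * f) = p` the factor `e` is not `1`, hence `e = p` and `f = g = 1`.
  have hefg := Ideal.ncard_primesOver_mul_ramificationIdxIn_mul_inertiaDegIn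
    (Ideal.span {(2 : ℤ)}) (𝓞 F) Gal(F/ℚ)
  rw [Ideal.ramificationIdxIn_eq_ramificationIdx _ P Gal(F/ℚ),
    Ideal.inertiaDegIn_eq_inertiaDeg _ P Gal(F/ℚ), hcard] at hefg
  have hep : P.ramificationIdx ℤ = p :=
    (hp.eq_one_or_self_of_dvd _ (hefg ▸ dvd_mul_of_dvd_right (dvd_mul_right _ _) _)).resolve_left he
  rw [hep] at hefg
  have hfg : (Ideal.primesOver (Ideal.span {(2 : ℤ)}) (𝓞 F)).ncard * P.inertiaDeg ℤ = 1 := by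
    apply Nat.eq_of_mul_eq_mul_left hp.pos
    linarith
  have hf : P.inertiaDeg ℤ = 1 := Nat.eq_one_of_mul_eq_one_left hfg
  have hg := Nat.eq_one_of_mul_eq_one_right hfg
  have hstab : ∀ σ : Gal(F/ℚ), σ • P = P := by
    intro σ
    obtain ⟨Q, hQ⟩ := Set.ncard_eq_one.mp hg
    have h1 : P ∈ Ideal.primesOver (Ideal.span {(2 : ℤ)}) (𝓞 F) := ⟨hP.isPrime, hPM⟩
    have h2 : σ • P ∈ Ideal.primesOver (Ideal.span {(2 : ℤ)}) (𝓞 F) :=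
      ⟨inferInstance, inferInstance⟩
    rw [hQ, Set.mem_singleton_iff] at h1 h2
    exact h2.trans h1.symm
  have hnorm : Nat.card (𝓞 F ⧸ P) = 2 := by
    have := Ideal.absNorm_pow_inertiaDeg (Ideal.span {(2 : ℤ)}) P
    rw [hf, pow_one] at this
    rw [← Submodule.cardQuot_apply, ← Ideal.absNorm_apply, ← this]
    simp
  have hres : ∀ x : 𝓞 F, x ∈ P ∨ x - 1 ∈ P := by
    intro x
    rw [← Ideal.Quotient.eq_zero_iff_mem, ← Ideal.Quotient.eq_zero_iff_mem, map_sub, map_one,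
      sub_eq_zero]
    have : Nontrivial (𝓞 F ⧸ P) := Ideal.Quotient.nontrivial_iff.mpr hP.ne_top
    by_contra! hx
    obtain ⟨a, b, hab, huniv⟩ := Nat.card_eq_two_iff.mp hnorm
    have hmem : ∀ y : 𝓞 F ⧸ P, y = a ∨ y = b := fun y ↦ by
      have hy := Set.mem_univ y
      rwa [← huniv] at hy
    have h01 : (0 : 𝓞 F ⧸ P) ≠ 1 := zero_ne_one
    rcases hmem 0 with h0 | h0 <;> rcases hmem 1 with h1 | h1 <;>
      rcases hmem (Ideal.Quotient.mk P x) with h | h <;> simp_all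
  have htriv : ∀ σ : Gal(F/ℚ), σ = 1 := by
    intro σ
    have hfix := eq_self_of_odd_order hP0 hP2 hres
      (σ := MulSemiringAction.toRingHom Gal(F/ℚ) (𝓞 F) σ)
      (fun x hx ↦ by
        have := Ideal.smul_mem_pointwise_smul σ x P hx
        rwa [hstab σ] at this) hodd
      (fun x ↦ by
        have hit : ∀ j : ℕ, (MulSemiringAction.toRingHom Gal(F/ℚ) (𝓞 F) σ)^[j] x = σ ^ j • x := by
          intro j
          induction j with
          | zero => simp
          | succ j ih => rw [Function.iterate_succ_apply', ih, pow_succ', mul_smul]; rfl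
        rw [hit, ← hcard, pow_card_eq_one', one_smul])
    have : FaithfulSMul Gal(F/ℚ) (𝓞 F) :=
      (inferInstance : IsGaloisGroup Gal(F/ℚ) ℤ (𝓞 F)).faithful
    exact FaithfulSMul.eq_of_smul_eq_smul (α := 𝓞 F) fun x ↦ (hfix x).trans (one_smul _ x).symm
  have : Subsingleton Gal(F/ℚ) := ⟨fun a b ↦ (htriv a).trans (htriv b).symm⟩
  exact hp.ne_one (hcard ▸ Nat.card_unique)

/-- An abelian extension of `ℚ` unramified outside 2 has degree a power of 2.
In particular there is no non-trivial abelian extension of `ℚ` of odd degree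
unramified outside 2. -/
theorem degree_pow_two_of_abelian_unramified_outside_two
    (K : Type) [Field K] [NumberField K] [IsGalois ℚ K]
    (hab : ∀ σ τ : K ≃ₐ[ℚ] K, σ * τ = τ * σ)
    (hram : ∀ p : ℕ, p.Prime → p ≠ 2 →
      Squarefree (Ideal.span {(p : 𝓞 K)} : Ideal (𝓞 K))) :
    ∃ k : ℕ, Module.finrank ℚ K = 2 ^ k := by
  by_contra hK
  rw [← IsGalois.card_aut_eq_finrank ℚ K] at hK
  let _ : CommGroup Gal(K/ℚ) := { (inferInstance : Group Gal(K/ℚ)) with mul_comm := hab }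
  obtain ⟨H, hp, hodd⟩ := exists_index_odd_prime hK
  have hfin : Module.finrank ℚ (IntermediateField.fixedField H) = H.index := by
    rw [IntermediateField.finrank_eq_fixingSubgroup_index,
      IntermediateField.fixingSubgroup_fixedField]
  have hN : H.Normal := inferInstance
  have : IsGalois ℚ (IntermediateField.fixedField H) := IsGalois.of_fixedField_normal_subgroup H
  rw [← hfin] at hp hodd
  exact finrank_not_odd_prime hp hodd fun q hq hq2 ↦ squarefree_of_algebra (hram q hq hq2)
end

section
/- Let E = ℚ(ζ_3, ∛5) be the splitting field over ℚ of the polynomial x³ − 5, a number field of degree 6 over ℚ. Then the class number of E is odd. -/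
open NumberField Polynomial

/-!
The class group of `E = ℚ(ζ₃, ∛5)` is killed by `3`, so it has no element of order `2` and its
order is odd.

The argument is that of genus theory. If `F ⊆ E` is a subfield with `E/F` Galois and `𝓞 F` a
principal ideal ring, then the product of the `Gal(E/F)`-conjugates of an ideal `I` of `𝓞 E` is
the extension of the relative norm of `I` (`map_relNorm_eq_prod`), hence is principal
(`prod_mk0_conj`). Let `a ≠ b` be two cube roots of `5` in `E`. With `F = ℚ(a)` and `F = ℚ(b)`, of
index `2`, this says that the involutions `τ` and `τ'` fixing `a` and `b` act on the class group by
inversion (`exists_involution`). Thus `τ * τ'` acts trivially; it generates `Gal(E/ℚ(ζ₃))`, and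
since `𝓞 ℚ(ζ₃)` is principal, taking `F = ℚ(ζ₃)` gives `c ^ 3 = 1` for every class `c`
(`pow_three_eq_one`).

It remains to see that `ℚ(∛5)` has class number one (`isPrincipalIdealRing_cubic`). Its ring of
integers is `ℤ[∛5]`, because the minimal polynomials of `∛5` and of `∛5 + 1` are Eisenstein at `5`
and at `3`, the only primes dividing the discriminant `-675` of `1, ∛5, ∛25`. The Minkowski bound is
then less than `8`, and the primes of norm at most `7` are generated by divisors of `2`, `3` and `5`
that are written down explicitly; there is none of norm `7`, as `5` is not a cube modulo `7`.
-/

namespace CubicFive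

variable {K : Type*} [Field K] [NumberField K]

/-! ### The ring of integers and the discriminant of `ℚ(∛5)` -/

lemma minpoly_eq_of_isEisensteinAt {p : ℤ} (hp : Prime p) {f : ℤ[X]} (hf : f.Monic)
    (hd : 0 < f.natDegree) (he : f.IsEisensteinAt (Ideal.span {p})) {x : K} (hx : aeval x f = 0) :
    minpoly ℤ x = f := by
  have hi : IsIntegral ℤ x := ⟨f, hf, by rwa [← aeval_def]⟩
  have hirr : Irreducible f :=
    he.irreducible ((Ideal.span_singleton_prime hp.ne_zero).2 hp) hf.isPrimitive hd
  have hass := (hirr.dvd_iff.1 (minpoly.isIntegrallyClosed_dvd hi hx)).resolve_left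
    (minpoly.not_isUnit ℤ x)
  exact (eq_of_monic_of_associated hf (minpoly.monic hi) hass).symm

lemma isEisensteinAt_five : (X ^ 3 - C 5 : ℤ[X]).IsEisensteinAt (Ideal.span {5}) := by
  refine (monic_X_pow_sub_C 5 (by norm_num)).isEisensteinAt_of_mem_of_notMem ?_ ?_ ?_
  · rw [Ne, Ideal.span_singleton_eq_top, Int.isUnit_iff]; norm_num
  · intro n hn
    rw [natDegree_X_pow_sub_C] at hn
    rw [Ideal.mem_span_singleton]
    interval_cases n <;> simp [coeff_X_pow]
  · rw [Ideal.span_singleton_pow, Ideal.mem_span_singleton]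
    simp [coeff_X_pow]

-- `X ^ 3 - 3 * X ^ 2 + 3 * X - 6` is `(X - 1) ^ 3 - 5`, the minimal polynomial of `∛5 + 1`.
lemma natDegree_shift : (X ^ 3 - C 3 * X ^ 2 + C 3 * X - C 6 : ℤ[X]).natDegree = 3 := by
  compute_degree!

lemma monic_shift : (X ^ 3 - C 3 * X ^ 2 + C 3 * X - C 6 : ℤ[X]).Monic := by
  monicity!

lemma isEisensteinAt_three :
    (X ^ 3 - C 3 * X ^ 2 + C 3 * X - C 6 : ℤ[X]).IsEisensteinAt (Ideal.span {3}) := by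
  refine monic_shift.isEisensteinAt_of_mem_of_notMem ?_ ?_ ?_
  · rw [Ne, Ideal.span_singleton_eq_top, Int.isUnit_iff]; norm_num
  · intro n hn
    rw [natDegree_shift] at hn
    rw [Ideal.mem_span_singleton]
    interval_cases n <;>
      simp only [coeff_sub, coeff_add, coeff_C_mul, coeff_X_pow, coeff_X, coeff_C] <;> norm_num
  · rw [Ideal.span_singleton_pow, Ideal.mem_span_singleton]
    simp only [coeff_sub, coeff_add, coeff_C_mul, coeff_X_pow, coeff_X, coeff_C]; norm_num

lemma minpoly_int {α : K} (h : α ^ 3 = 5) : minpoly ℤ α = X ^ 3 - C 5 :=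
  minpoly_eq_of_isEisensteinAt (by norm_num) (monic_X_pow_sub_C 5 (by norm_num))
    (by rw [natDegree_X_pow_sub_C]; norm_num) isEisensteinAt_five
    (by rw [map_sub, map_pow, aeval_X, aeval_C, h]; simp)

lemma minpoly_int_shift {α : K} (h : α ^ 3 = 5) :
    minpoly ℤ (α + 1) = X ^ 3 - C 3 * X ^ 2 + C 3 * X - C 6 :=
  minpoly_eq_of_isEisensteinAt (by norm_num) monic_shift
    (by rw [natDegree_shift]; norm_num) isEisensteinAt_three
    (by
      simp only [map_sub, map_add, map_mul, map_pow, aeval_X, aeval_C]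
      simp only [algebraMap_int_eq, eq_intCast, Int.cast_ofNat]
      linear_combination h)

lemma isIntegral_root {F : Type*} [Field F] {α : F} (h : α ^ 3 = 5) : IsIntegral ℤ α :=
  ⟨_, monic_X_pow_sub_C 5 (n := 3) (by norm_num), by simp [h]⟩

lemma minpoly_rat {α : K} (h : α ^ 3 = 5) : minpoly ℚ α = X ^ 3 - C 5 := by
  rw [minpoly.isIntegrallyClosed_eq_field_fractions' ℚ (isIntegral_root h), minpoly_int h]
  simp only [Polynomial.map_sub, Polynomial.map_pow, map_X, map_C]
  simp

open IntermediateField in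
lemma finrank_adjoin {α : K} (h : α ^ 3 = 5) : Module.finrank ℚ ℚ⟮α⟯ = 3 := by
  rw [IntermediateField.adjoin.finrank (Algebra.IsIntegral.isIntegral α), minpoly_rat h,
    natDegree_X_pow_sub_C]

open IntermediateField in
lemma exists_powerBasis (hK : Module.finrank ℚ K = 3) {α : K} (h : α ^ 3 = 5) :
    ∃ pb : PowerBasis ℚ K, pb.gen = α := by
  have htop : ℚ⟮α⟯ = ⊤ := by
    refine IntermediateField.eq_of_le_of_finrank_eq le_top ?_
    rw [finrank_adjoin h, IntermediateField.finrank_top', hK]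
  refine ⟨(IntermediateField.adjoin.powerBasis (Algebra.IsIntegral.isIntegral α)).map
    ((IntermediateField.equivOfEq htop).trans IntermediateField.topEquiv), ?_⟩
  simp

open IntermediateField in
lemma exists_powerBasis_shift (hK : Module.finrank ℚ K = 3) {α : K} (h : α ^ 3 = 5) :
    ∃ pb : PowerBasis ℚ K, pb.gen = α + 1 := by
  have htop : ℚ⟮α + 1⟯ = ⊤ := by
    refine IntermediateField.eq_of_le_of_finrank_eq le_top ?_
    have h1 := finrank_adjoin h
    have : ℚ⟮α + 1⟯ = ℚ⟮α⟯ := by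
      apply le_antisymm
      · rw [adjoin_simple_le_iff]
        exact add_mem (mem_adjoin_simple_self ℚ α) (one_mem _)
      · rw [adjoin_simple_le_iff]
        simpa using sub_mem (mem_adjoin_simple_self ℚ (α + 1)) (one_mem _)
    rw [this, h1, IntermediateField.finrank_top', hK]
  refine ⟨(IntermediateField.adjoin.powerBasis (Algebra.IsIntegral.isIntegral (α + 1))).map
    ((IntermediateField.equivOfEq htop).trans IntermediateField.topEquiv), ?_⟩
  simp

lemma discr_powerBasis (hK : Module.finrank ℚ K = 3) (pb : PowerBasis ℚ K) (h : pb.gen ^ 3 = 5) :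
    Algebra.discr ℚ pb.basis = -675 := by
  have hd : pb.dim = 3 := by rw [← pb.finrank, hK]
  have hn : Algebra.norm ℚ pb.gen = 5 := by
    rw [Algebra.PowerBasis.norm_gen_eq_coeff_zero_minpoly, minpoly_rat h, hd]
    norm_num [coeff_X_pow]
  rw [Algebra.discr_powerBasis_eq_norm, minpoly_rat h, hK]
  have : aeval pb.gen (derivative (X ^ 3 - C 5 : ℚ[X])) = algebraMap ℚ K 3 * pb.gen ^ 2 := by
    norm_num
  rw [this, map_mul, map_pow, hn, Algebra.norm_algebraMap, hK]
  norm_num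

/-- `ℤ[∛5]` is integrally closed. The discriminant `-675 = -3 ^ 3 * 5 ^ 2` multiplies integral
elements into it; the factor `5 ^ 2` is removed by the Eisenstein criterion for `∛5` and the factor
`3 ^ 3` by the one for `∛5 + 1`. -/
lemma mem_adjoin_of_isIntegral (hK : Module.finrank ℚ K = 3) {α : K} (h : α ^ 3 = 5) {z : K}
    (hz : IsIntegral ℤ z) : z ∈ Algebra.adjoin ℤ {α} := by
  obtain ⟨pb, rfl⟩ := exists_powerBasis hK h
  have hi := isIntegral_root h
  have h675 := Algebra.discr_mul_isIntegral_mem_adjoin ℚ hi hz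
  rw [discr_powerBasis hK pb h] at h675
  have h27 : (27 : ℤ) • z ∈ Algebra.adjoin ℤ {pb.gen} := by
    refine mem_adjoin_of_smul_prime_pow_smul_of_minpoly_isEisensteinAt (p := (5 : ℤ)) (n := 2)
      (by norm_num) hi (hz.smul _) ?_ (minpoly_int h ▸ isEisensteinAt_five)
    convert neg_mem h675 using 1
    rw [← neg_smul, smul_smul, ← Int.cast_smul_eq_zsmul ℚ]
    norm_num
  obtain ⟨pb', hpb'⟩ := exists_powerBasis_shift hK h
  have hadj : Algebra.adjoin ℤ {pb'.gen} = Algebra.adjoin ℤ {pb.gen} := by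
    rw [hpb']
    apply le_antisymm
    · refine Algebra.adjoin_singleton_le ?_
      exact add_mem (Algebra.self_mem_adjoin_singleton ℤ _) (one_mem _)
    · refine Algebra.adjoin_singleton_le ?_
      simpa using sub_mem (Algebra.self_mem_adjoin_singleton ℤ (pb.gen + 1)) (one_mem _)
  rw [← hadj] at h27 ⊢
  refine mem_adjoin_of_smul_prime_pow_smul_of_minpoly_isEisensteinAt (p := (3 : ℤ)) (n := 3)
      (by norm_num) (hpb' ▸ hi.add isIntegral_one) hz ?_
      (hpb' ▸ minpoly_int_shift h ▸ isEisensteinAt_three)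
  simpa using h27

lemma adjoin_eq_top (hK : Module.finrank ℚ K = 3) {θ : 𝓞 K} (h : θ ^ 3 = 5) :
    Algebra.adjoin ℤ {θ} = ⊤ := by
  have h' : (θ : K) ^ 3 = 5 := by rw [← map_pow, h, map_ofNat]
  refine eq_top_iff.2 fun z _ ↦ ?_
  have hz := mem_adjoin_of_isIntegral hK h' (RingOfIntegers.isIntegral_coe z)
  have : Algebra.adjoin ℤ {(θ : K)} =
      (Algebra.adjoin ℤ {θ}).map (IsScalarTower.toAlgHom ℤ (𝓞 K) K) := by
    rw [AlgHom.map_adjoin, Set.image_singleton]; rfl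
  rw [this] at hz
  obtain ⟨y, hy, hyz⟩ := hz
  have : y = z := RingOfIntegers.ext hyz
  exact this ▸ hy

lemma discr_eq (hK : Module.finrank ℚ K = 3) {θ : 𝓞 K} (h : θ ^ 3 = 5) :
    NumberField.discr K = -675 := by
  have h' : (θ : K) ^ 3 = 5 := by rw [← map_pow, h, map_ofNat]
  obtain ⟨pb, hpb⟩ := exists_powerBasis hK h'
  let pB := PowerBasis.ofAdjoinEqTop' (RingOfIntegers.isIntegral θ) (adjoin_eq_top hK h)
  have hgen : pB.gen = θ := PowerBasis.ofAdjoinEqTop'_gen _ _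
  apply (algebraMap ℤ ℚ).injective_int
  rw [← NumberField.discr_eq_discr _ pB.basis,
    ← Algebra.discr_localizationLocalization ℤ (nonZeroDivisors ℤ) K]
  have h2 := discr_powerBasis hK pb (hpb ▸ h')
  trans Algebra.discr ℚ pb.basis
  · have hdim : pB.dim = pb.dim := by
      rw [← PowerBasis.finrank, ← PowerBasis.finrank]
      exact RingOfIntegers.rank K
    rw [← Algebra.discr_reindex _ _ (finCongr hdim)]
    congr 1
    ext i
    simp [hgen, hpb]
  · rw [h2]; simp

/-! ### The ring of integers of `ℚ(∛5)` is principal -/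

open InfinitePlace in
lemma minkowski_lt (hK : Module.finrank ℚ K = 3) {θ : 𝓞 K} (h : θ ^ 3 = 5) :
    (4 / Real.pi) ^ nrComplexPlaces K * ((Module.finrank ℚ K).factorial /
      (Module.finrank ℚ K) ^ (Module.finrank ℚ K) * √|NumberField.discr K|) < 8 := by
  have hr : nrComplexPlaces K ≤ 1 := by
    have := card_add_two_mul_card_eq_rank K
    omega
  have hpi := Real.pi_gt_three
  have hpi4 := Real.pi_lt_four
  have h1 : (4 / Real.pi) ^ nrComplexPlaces K ≤ 4 / 3 := by
    calc (4 / Real.pi) ^ nrComplexPlaces K ≤ (4 / Real.pi) ^ 1 := by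
          refine pow_le_pow_right₀ ?_ hr
          rw [le_div_iff₀ (by linarith)]; linarith
      _ ≤ 4 / 3 := by rw [pow_one]; gcongr
  have h2 : √|(NumberField.discr K : ℝ)| < 26 := by
    rw [discr_eq hK h, Real.sqrt_lt' (by norm_num)]; norm_num
  rw [hK]
  have h3 : (0 : ℝ) ≤ √|(NumberField.discr K : ℝ)| := Real.sqrt_nonneg _
  calc _ ≤ 4 / 3 * (((3).factorial : ℝ) / ((3 : ℕ) : ℝ) ^ 3 * √|(NumberField.discr K : ℝ)|) := by
        push_cast; gcongr
    _ < 8 := by norm_num [Nat.factorial]; linarith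

/-- If `θ` is congruent to an integer modulo `π`, then so is every element of `𝓞 K = ℤ[θ]`. -/
lemma exists_int_dvd_sub (hK : Module.finrank ℚ K = 3) {θ : 𝓞 K} (h : θ ^ 3 = 5) {π : 𝓞 K} {m : ℤ}
    (hm : π ∣ θ - m) (x : 𝓞 K) : ∃ n : ℤ, π ∣ x - n := by
  have hx : x ∈ Algebra.adjoin ℤ {θ} := adjoin_eq_top hK h ▸ Algebra.mem_top
  induction hx using Algebra.adjoin_induction with
  | mem y hy => exact ⟨m, by rwa [Set.mem_singleton_iff.1 hy]⟩
  | algebraMap r => exact ⟨r, by simp⟩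
  | add y z _ _ hy hz =>
    obtain ⟨a, c, ha⟩ := hy
    obtain ⟨b, d, hb⟩ := hz
    exact ⟨a + b, c + d, by push_cast; linear_combination ha + hb⟩
  | mul y z _ _ hy hz =>
    obtain ⟨a, c, ha⟩ := hy
    obtain ⟨b, d, hb⟩ := hz
    exact ⟨a * b, c * z + a * d, by push_cast; linear_combination z * ha + a * hb⟩

/-- Modulo a divisor `π` of `θ ^ 2 + θ + 1`, every element of `𝓞 K = ℤ[θ]` is congruent to a
linear polynomial in `θ`. This serves for the prime of norm `4`. -/
lemma exists_linear_dvd_sub (hK : Module.finrank ℚ K = 3) {θ : 𝓞 K} (h : θ ^ 3 = 5) {π : 𝓞 K}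
    (hm : π ∣ θ ^ 2 + θ + 1) (x : 𝓞 K) : ∃ a b : ℤ, π ∣ x - (a + b * θ) := by
  obtain ⟨e, he⟩ := hm
  have hx : x ∈ Algebra.adjoin ℤ {θ} := adjoin_eq_top hK h ▸ Algebra.mem_top
  induction hx using Algebra.adjoin_induction with
  | mem y hy => exact ⟨0, 1, by rw [Set.mem_singleton_iff.1 hy]; simp⟩
  | algebraMap r => exact ⟨r, 0, by simp⟩
  | add y z _ _ hy hz =>
    obtain ⟨a, b, c, ha⟩ := hy
    obtain ⟨a', b', c', ha'⟩ := hz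
    exact ⟨a + a', b + b', c + c', by push_cast; linear_combination ha + ha'⟩
  | mul y z _ _ hy hz =>
    obtain ⟨a, b, c, ha⟩ := hy
    obtain ⟨a', b', c', ha'⟩ := hz
    exact ⟨a * a' - b * b', a * b' + b * a' - b * b', c * z + (a + b * θ) * c' + b * b' * e, by
      push_cast; linear_combination z * ha + (a + b * θ) * ha' + b * b' * he⟩

lemma one_mem_of_coprime {R : Type*} [CommRing R] {P : Ideal R} {m n : ℤ} (hm : (m : R) ∈ P)
    (hn : (n : R) ∈ P) (h : IsCoprime m n) : (1 : R) ∈ P := by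
  obtain ⟨u, v, huv⟩ := h
  have : (1 : R) = u * m + v * n := by simpa using (congrArg (Int.cast : ℤ → R) huv).symm
  rw [this]
  exact add_mem (P.mul_mem_left _ hm) (P.mul_mem_left _ hn)

/-- If `π` divides a rational prime `p` and `𝓞 K / π` is a quotient of `ℤ`, then `π` generates any
prime ideal that contains it: the residue ring `𝓞 K / π` is a quotient of `ℤ / p`. -/
lemma eq_span_of_mem (hK : Module.finrank ℚ K = 3) {θ : 𝓞 K} (h : θ ^ 3 = 5) {π : 𝓞 K} {m p : ℤ}
    (hp : Prime p) (hm : π ∣ θ - m) (hπp : π ∣ p) {P : Ideal (𝓞 K)} [P.IsPrime] (hπ : π ∈ P) :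
    P = Ideal.span {π} := by
  refine le_antisymm (fun x hx ↦ ?_) ((Ideal.span_singleton_le_iff_mem P).2 hπ)
  have hpP : (p : 𝓞 K) ∈ P := P.mem_of_dvd hπp hπ
  obtain ⟨n, hn⟩ := exists_int_dvd_sub hK h hm x
  have hnP : (n : 𝓞 K) ∈ P := by
    simpa using sub_mem hx (P.mem_of_dvd hn hπ)
  rw [Ideal.mem_span_singleton]
  have hpn : p ∣ n := by
    by_contra hcon
    exact (Ideal.ne_top_iff_one P).1 Ideal.IsPrime.ne_top'
      (one_mem_of_coprime hpP hnP ((Prime.coprime_iff_not_dvd hp).2 hcon))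
  obtain ⟨c, rfl⟩ := hpn
  have : π ∣ ((p * c : ℤ) : 𝓞 K) := by push_cast; exact hπp.mul_right _
  simpa using dvd_add hn this

/-- The primes above `2` are generated by `θ ^ 2 - 3`, of norm `2`, and by
`9 + 5 * θ + 3 * θ ^ 2`, of norm `4`. -/
lemma isPrincipal_of_two_mem (hK : Module.finrank ℚ K = 3) {θ : 𝓞 K} (h : θ ^ 3 = 5)
    {P : Ideal (𝓞 K)} [hP : P.IsPrime] (h2 : (2 : 𝓞 K) ∈ P) : P.IsPrincipal := by
  have h1 : (1 : 𝓞 K) ∉ P := (Ideal.ne_top_iff_one P).1 Ideal.IsPrime.ne_top'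
  have hfac : (θ ^ 2 - 3) * (9 + 5 * θ + 3 * θ ^ 2) = -2 := by
    linear_combination (5 + 3 * θ) * h
  by_cases hπ : θ ^ 2 - 3 ∈ P
  · refine ⟨θ ^ 2 - 3, eq_span_of_mem hK h (m := 1) (p := 2) (by norm_num) ?_ ?_ hπ⟩
    · exact ⟨-(3 + 2 * θ + θ ^ 2), by push_cast; linear_combination (θ + 2) * h⟩
    · exact ⟨-(9 + 5 * θ + 3 * θ ^ 2), by push_cast; linear_combination hfac⟩
  have hβ : 9 + 5 * θ + 3 * θ ^ 2 ∈ P := by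
    refine (hP.mem_or_mem (x := θ ^ 2 - 3) ?_).resolve_left hπ
    rw [hfac]; exact neg_mem h2
  -- Reduce `x ∈ P` to `a + b * θ` with `a` and `b` taken modulo `2`: the three nonzero residues
  -- `θ`, `1` and `1 + θ` do not lie in `P`.
  refine ⟨9 + 5 * θ + 3 * θ ^ 2, le_antisymm (fun x hx ↦ ?_)
    ((Ideal.span_singleton_le_iff_mem P).2 hβ)⟩
  obtain ⟨a, b, hab⟩ := exists_linear_dvd_sub hK h (π := 9 + 5 * θ + 3 * θ ^ 2)
    ⟨θ ^ 2 - θ - 1, by linear_combination -(3 * θ + 2) * h⟩ x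
  have habP : (a + b * θ : 𝓞 K) ∈ P := by
    simpa using sub_mem hx (P.mem_of_dvd hab hβ)
  have hdvd2 : 9 + 5 * θ + 3 * θ ^ 2 ∣ (2 : 𝓞 K) := ⟨-(θ ^ 2 - 3), by linear_combination hfac⟩
  rw [Ideal.submodule_span_eq, Ideal.mem_span_singleton]
  obtain ⟨a', ha'⟩ := Int.even_or_odd' a
  obtain ⟨b', hb'⟩ := Int.even_or_odd' b
  rcases ha' with rfl | rfl <;> rcases hb' with rfl | rfl
  · have := dvd_add hab (hdvd2.mul_right (a' + b' * θ))
    convert this using 1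
    push_cast; ring
  · exfalso
    have hθ : θ ∈ P := by
      have := sub_mem habP (P.mul_mem_right (a' + b' * θ) h2)
      convert this using 1
      push_cast; ring
    have h5 : (5 : 𝓞 K) ∈ P := h ▸ P.pow_mem_of_mem hθ 3 (by norm_num)
    exact h1 (one_mem_of_coprime (m := 2) (n := 5) (by simpa using h2) (by simpa using h5)
      (by norm_num))
  · exfalso
    apply h1
    have := sub_mem habP (P.mul_mem_right (a' + b' * θ) h2)
    convert this using 1
    push_cast; ring
  · exfalso
    have hθ : 1 + θ ∈ P := by
      have := sub_mem habP (P.mul_mem_right (a' + b' * θ) h2)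
      convert this using 1
      push_cast; ring
    -- `θ ^ 2 - 3 = (θ - 1) * (1 + θ) - 2`
    apply hπ
    have := sub_mem (P.mul_mem_left (θ - 1) hθ) h2
    convert this using 1
    ring

lemma isPrincipal_of_three_mem (hK : Module.finrank ℚ K = 3) {θ : 𝓞 K} (h : θ ^ 3 = 5)
    {P : Ideal (𝓞 K)} [hP : P.IsPrime] (h3 : (3 : 𝓞 K) ∈ P) : P.IsPrincipal := by
  have hmem : θ - 2 ∈ P := by
    -- `(θ - 2) ^ 3 = 3 * (-1 + 4 * θ - 2 * θ ^ 2)`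
    refine hP.mem_of_pow_mem 3 ?_
    have := P.mul_mem_right (-1 + 4 * θ - 2 * θ ^ 2) h3
    convert this using 1
    linear_combination h
  refine ⟨θ - 2, eq_span_of_mem hK h (m := 2) (p := 3) (by norm_num) (by simp) ?_ hmem⟩
  exact ⟨-(θ ^ 2 + 2 * θ + 4), by push_cast; linear_combination h⟩

lemma isPrincipal_of_five_mem (hK : Module.finrank ℚ K = 3) {θ : 𝓞 K} (h : θ ^ 3 = 5)
    {P : Ideal (𝓞 K)} [hP : P.IsPrime] (h5 : (5 : 𝓞 K) ∈ P) : P.IsPrincipal := by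
  refine ⟨θ, eq_span_of_mem hK h (m := 0) (p := 5) (by norm_num) (by simp) ?_
    (hP.mem_of_pow_mem 3 (h ▸ h5))⟩
  exact ⟨θ ^ 2, by push_cast; linear_combination -h⟩

/-- No prime has norm `7`: in a residue field with `7` elements, `θ = θ ^ 7 = 25 * θ`, so
`24 * θ = 0`, while `24` and `θ ^ 3 = 5` are prime to `7`. -/
lemma absNorm_ne_seven {θ : 𝓞 K} (h : θ ^ 3 = 5)
    {P : Ideal (𝓞 K)} [hP : P.IsPrime] : Ideal.absNorm P ≠ 7 := by
  intro h7
  have h1 : (1 : 𝓞 K) ∉ P := (Ideal.ne_top_iff_one P).1 Ideal.IsPrime.ne_top'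
  have h7P : ((7 : ℤ) : 𝓞 K) ∈ P := by simpa [h7] using Ideal.absNorm_mem P
  have hbot : P ≠ ⊥ := by rintro rfl; simp at h7
  have : P.IsMaximal := hP.isMaximal hbot
  let _ : Field (𝓞 K ⧸ P) := Ideal.Quotient.field P
  have hcard : Nat.card (𝓞 K ⧸ P) = 7 := by
    rw [← h7, Ideal.absNorm_apply, Submodule.cardQuot_apply]
  have : Finite (𝓞 K ⧸ P) := Nat.finite_of_card_ne_zero (by omega)
  let _ : Fintype (𝓞 K ⧸ P) := Fintype.ofFinite _
  have hpow := FiniteField.pow_card (Ideal.Quotient.mk P θ)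
  rw [← Nat.card_eq_fintype_card, hcard, ← map_pow, Ideal.Quotient.eq] at hpow
  have h24 : 24 * θ ∈ P := by
    convert hpow using 1
    linear_combination -(θ ^ 4 + 5 * θ) * h
  rcases hP.mem_or_mem h24 with h' | h'
  · exact h1 (one_mem_of_coprime (n := 24) h7P (by simpa using h') (by norm_num))
  · have h5 : (5 : 𝓞 K) ∈ P := h ▸ P.pow_mem_of_mem h' 3 (by norm_num)
    exact h1 (one_mem_of_coprime (n := 5) h7P (by simpa using h5) (by norm_num))

/-- A cubic field containing a cube root of `5` has class number one. -/
theorem isPrincipalIdealRing_cubic (hK : Module.finrank ℚ K = 3) {α : K} (h : α ^ 3 = 5) :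
    IsPrincipalIdealRing (𝓞 K) := by
  obtain ⟨θ, hθ⟩ : ∃ θ : 𝓞 K, θ ^ 3 = 5 :=
    ⟨⟨α, isIntegral_root h⟩, RingOfIntegers.ext h⟩
  refine RingOfIntegers.isPrincipalIdealRing_of_isPrincipal_of_norm_le_of_isPrime
    fun ⟨P, hP0⟩ hP hle ↦ ?_
  replace hP : P.IsPrime := hP
  have hlt : Ideal.absNorm P < 8 := by exact_mod_cast hle.trans_lt (minkowski_lt hK hθ)
  have hne0 : Ideal.absNorm P ≠ 0 := by
    rw [Ne, Ideal.absNorm_eq_zero_iff]; exact nonZeroDivisors.ne_zero hP0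
  have hmem := Ideal.absNorm_mem P
  have h7 := absNorm_ne_seven hθ (P := P)
  change P.IsPrincipal
  generalize Ideal.absNorm P = n at *
  have h4 : (4 : 𝓞 K) = 2 * 2 := by norm_num
  have h6 : (6 : 𝓞 K) = 2 * 3 := by norm_num
  interval_cases n
  · exact absurd rfl hne0
  · exact absurd (by simpa using hmem) ((Ideal.ne_top_iff_one P).1 hP.ne_top)
  · exact isPrincipal_of_two_mem hK hθ (by simpa using hmem)
  · exact isPrincipal_of_three_mem hK hθ (by simpa using hmem)
  · rw [Nat.cast_ofNat, h4] at hmem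
    exact isPrincipal_of_two_mem hK hθ ((hP.mem_or_mem hmem).elim id id)
  · exact isPrincipal_of_five_mem hK hθ (by simpa using hmem)
  · rw [Nat.cast_ofNat, h6] at hmem
    exact (hP.mem_or_mem hmem).elim (isPrincipal_of_two_mem hK hθ) (isPrincipal_of_three_mem hK hθ)
  · exact absurd rfl h7

/-! ### Relative norms of ideals as products of conjugates -/

section
open scoped nonZeroDivisors Pointwise

variable {F E : Type*} [Field F] [NumberField F] [Field E] [NumberField E] [Algebra F E]
  [IsGalois F E]

lemma algebraMap_intNorm_eq_prod (x : 𝓞 E) :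
    algebraMap (𝓞 F) (𝓞 E) (Algebra.intNorm (𝓞 F) (𝓞 E) x) = ∏ g : Gal(E/F), g • x := by
  apply RingOfIntegers.coe_injective
  rw [← IsScalarTower.algebraMap_apply, IsScalarTower.algebraMap_apply (𝓞 F) F E,
    Algebra.algebraMap_intNorm (L := E), Algebra.norm_eq_prod_automorphisms, map_prod]
  rfl

/-- In a Galois extension `E/F`, the extension to `𝓞 E` of the relative norm of an ideal is the
product of its conjugates. The norms of the elements of `I` lie in that product, which gives one
inclusion; both sides have the same relative norm, so the inclusion is an equality. -/
lemma map_relNorm_eq_prod (I : Ideal (𝓞 E)) :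
    (Ideal.relNorm (𝓞 F) I).map (algebraMap (𝓞 F) (𝓞 E)) = ∏ g : Gal(E/F), g • I := by
  rcases eq_or_ne I ⊥ with rfl | hI
  · rw [Ideal.relNorm_bot, Ideal.map_bot]
    symm
    exact Finset.prod_eq_zero (Finset.mem_univ 1) (one_smul _ _)
  have hle : (Ideal.relNorm (𝓞 F) I).map (algebraMap (𝓞 F) (𝓞 E)) ≤ ∏ g : Gal(E/F), g • I := by
    rw [Ideal.map_relNorm, Ideal.span_le]
    rintro _ ⟨x, hx, rfl⟩
    rw [Function.comp_apply, algebraMap_intNorm_eq_prod]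
    exact Ideal.prod_mem_prod fun g _ ↦ Ideal.smul_mem_pointwise_smul g x I hx
  obtain ⟨Q, hQ⟩ := Ideal.dvd_iff_le.2 hle
  have hcard : Fintype.card Gal(E/F) = Module.finrank (𝓞 F) (𝓞 E) := by
    rw [← Nat.card_eq_fintype_card, IsGalois.card_aut_eq_finrank,
      IsFractionRing.finrank_eq (𝓞 F) F (𝓞 E) E]
  have hN := congrArg (Ideal.relNorm (𝓞 F)) hQ
  rw [Ideal.relNorm_algebraMap, map_mul, map_prod] at hN
  simp only [Ideal.relNorm_smul, Finset.prod_const, Finset.card_univ, hcard] at hN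
  have hQN : Ideal.relNorm (𝓞 F) Q = 1 := by
    refine (mul_left_cancel₀ (pow_ne_zero _ ?_) (hN.symm.trans (mul_one _).symm))
    rwa [Ne, Ideal.zero_eq_bot, Ideal.relNorm_eq_bot_iff]
  have hQtop : Q = ⊤ := by
    have := Ideal.relNorm_le_comap (𝓞 F) Q
    rw [hQN, Ideal.one_eq_top, top_le_iff, Ideal.comap_eq_top_iff] at this
    exact this
  rw [hQ, hQtop, ← Ideal.one_eq_top, mul_one]

end

/-! ### The Galois action on the class group -/

section
open scoped nonZeroDivisors Pointwise
variable {E : Type*} [Field E] [NumberField E]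

/-- The conjugate `g • I` of a nonzero ideal `I` of `𝓞 E` by an automorphism `g` of `E`, as a nonzero
ideal, that is, in the form that `ClassGroup.mk0` takes. -/
noncomputable def conj (g : Gal(E/ℚ)) (I : (Ideal (𝓞 E))⁰) : (Ideal (𝓞 E))⁰ :=
  ⟨g • (I : Ideal (𝓞 E)), by
    rw [mem_nonZeroDivisors_iff_ne_zero]
    intro h
    refine nonZeroDivisors.coe_ne_zero I ?_
    rw [← inv_smul_smul g (I : Ideal (𝓞 E)), h]
    exact smul_zero _⟩

lemma conj_one (I : (Ideal (𝓞 E))⁰) : conj 1 I = I := Subtype.ext (one_smul _ _)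

lemma conj_mul (g h : Gal(E/ℚ)) (I : (Ideal (𝓞 E))⁰) : conj (g * h) I = conj g (conj h I) :=
  Subtype.ext (mul_smul _ _ _)

variable [IsGalois ℚ E]

/-- If `𝓞 F` is principal, the norm from `E` to `F` kills the class group of `E`. -/
lemma prod_mk0_conj (F : IntermediateField ℚ E) [IsPrincipalIdealRing (𝓞 F)] (I : (Ideal (𝓞 E))⁰) :
    ∏ g : Gal(E/F), ClassGroup.mk0 (conj (g.restrictScalars ℚ) I) = 1 := by
  rw [← map_prod]
  have hcoe : ((∏ g : Gal(E/F), conj (g.restrictScalars ℚ) I : (Ideal (𝓞 E))⁰) : Ideal (𝓞 E)) =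
      ∏ g : Gal(E/F), g • (I : Ideal (𝓞 E)) := by
    rw [Submonoid.coe_finsetProd]
    rfl
  generalize ∏ g : Gal(E/F), conj (g.restrictScalars ℚ) I = J at hcoe ⊢
  refine (ClassGroup.mk0_eq_one_iff J.2).2 ?_
  rw [hcoe, ← map_relNorm_eq_prod]
  exact (IsPrincipalIdealRing.principal _).map_ringHom _

/-- If `E/F` is quadratic and `𝓞 F` is principal, the nontrivial automorphism of `E/F` acts by
inversion on the class group of `E`. -/
lemma exists_involution (F : IntermediateField ℚ E) [IsPrincipalIdealRing (𝓞 F)]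
    (hF : Module.finrank F E = 2) : ∃ τ : Gal(E/ℚ), τ ≠ 1 ∧ (∀ x ∈ F, τ x = x) ∧
      ∀ I, ClassGroup.mk0 (conj τ I) = (ClassGroup.mk0 I)⁻¹ := by
  classical
  have hcard : Fintype.card Gal(E/F) = 2 := by
    rw [← Nat.card_eq_fintype_card, IsGalois.card_aut_eq_finrank, hF]
  obtain ⟨t, ht⟩ : ∃ t : Gal(E/F), t ≠ 1 := Fintype.exists_ne_of_one_lt_card (by omega) 1
  have huniv : (Finset.univ : Finset Gal(E/F)) = {1, t} := by
    symm
    rw [← Finset.card_eq_iff_eq_univ, Finset.card_pair ht.symm, hcard]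
  refine ⟨t.restrictScalars ℚ, fun h ↦ ht ?_, fun x hx ↦ t.commutes ⟨x, hx⟩, fun I ↦ ?_⟩
  · ext x; exact DFunLike.congr_fun h x
  · have := prod_mk0_conj F I
    rw [huniv, Finset.prod_pair ht.symm] at this
    have h1 : conj ((1 : Gal(E/F)).restrictScalars ℚ) I = I := conj_one I
    rw [h1] at this
    exact eq_inv_of_mul_eq_one_right this

end

open scoped nonZeroDivisors Pointwise in
/-- Suppose `E/F` is Galois of degree `3` with `𝓞 F` principal, and `Gal(E/F)` contains a nontrivial
product of two automorphisms that act by inversion on the class group. Then `Gal(E/F)` acts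
trivially on the class group, so the norm to `F` is cubing, and cubes are trivial. -/
lemma pow_three_eq_one {E : Type*} [Field E] [NumberField E] [IsGalois ℚ E]
    (F : IntermediateField ℚ E) [IsPrincipalIdealRing (𝓞 F)] (hF : Module.finrank F E = 3)
    {τ τ' : Gal(E/ℚ)} (hne : τ * τ' ≠ 1) (hfix : ∀ x ∈ F, (τ * τ') x = x)
    (h : ∀ I, ClassGroup.mk0 (conj τ I) = (ClassGroup.mk0 I)⁻¹)
    (h' : ∀ I, ClassGroup.mk0 (conj τ' I) = (ClassGroup.mk0 I)⁻¹) (c : ClassGroup (𝓞 E)) :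
    c ^ 3 = 1 := by
  obtain ⟨I, rfl⟩ := ClassGroup.mk0_surjective c
  have hcard : Nat.card Gal(E/F) = 3 := by rw [IsGalois.card_aut_eq_finrank, hF]
  let σ : Gal(E/F) := F.fixingSubgroupEquiv ⟨τ * τ', fun x ↦ hfix x x.2⟩
  have hσ1 : σ ≠ 1 := by
    intro hσ
    apply hne
    ext x
    exact DFunLike.congr_fun hσ x
  have hσ (J) : ClassGroup.mk0 (conj (σ.restrictScalars ℚ) J) = ClassGroup.mk0 J := by
    have : σ.restrictScalars ℚ = τ * τ' := rfl
    rw [this, conj_mul, h, h', inv_inv]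
  have hpow (n : ℕ) : ClassGroup.mk0 (conj ((σ ^ n).restrictScalars ℚ) I) = ClassGroup.mk0 I := by
    induction n with
    | zero => exact congrArg _ (conj_one I)
    | succ n ih =>
      have : (σ ^ (n + 1)).restrictScalars ℚ =
        σ.restrictScalars ℚ * (σ ^ n).restrictScalars ℚ := by rw [pow_succ']; rfl
      rw [this, conj_mul, hσ, ih]
  have hall (g : Gal(E/F)) : ClassGroup.mk0 (conj (g.restrictScalars ℚ) I) = ClassGroup.mk0 I := by
    have : Fact (Nat.Prime 3) := ⟨by norm_num⟩
    obtain ⟨n, rfl⟩ := mem_powers_of_prime_card hcard hσ1 (g' := g)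
    exact hpow n
  have := prod_mk0_conj F I
  simp only [hall, Finset.prod_const, Finset.card_univ] at this
  rwa [← Nat.card_eq_fintype_card, hcard] at this

/-! ### The splitting field of `X ^ 3 - 5` -/

section
variable {F : Type*} [Field F] {a b c : F}

lemma quad_eq_zero (ha : a ^ 3 = 5) (hb : b ^ 3 = 5) (hab : a ≠ b) : a ^ 2 + a * b + b ^ 2 = 0 := by
  have : (a - b) * (a ^ 2 + a * b + b ^ 2) = 0 := by linear_combination ha - hb
  exact (mul_eq_zero.1 this).resolve_left (sub_ne_zero.2 hab)

lemma third_root (ha : a ^ 3 = 5) (hb : b ^ 3 = 5) (hc : c ^ 3 = 5) (hab : a ≠ b) (hca : c ≠ a)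
    (hcb : c ≠ b) : c = -(a + b) := by
  have h1 := quad_eq_zero hc ha hca
  have h2 := quad_eq_zero hc hb hcb
  have : (a - b) * (c + (a + b)) = 0 := by linear_combination h1 - h2
  exact eq_neg_of_add_eq_zero_left ((mul_eq_zero.1 this).resolve_left (sub_ne_zero.2 hab))

end

section
variable {E : Type*} [Field E] [NumberField E]

lemma mem_rootSet_iff {x : E} : x ∈ (X ^ 3 - C 5 : ℚ[X]).rootSet E ↔ x ^ 3 = 5 := by
  rw [mem_rootSet_of_ne (monic_X_pow_sub_C 5 (by norm_num)).ne_zero]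
  rw [map_sub, map_pow, aeval_X, aeval_C, sub_eq_zero]
  simp

lemma separable_five : (X ^ 3 - C 5 : ℚ[X]).Separable :=
  separable_X_pow_sub_C 5 (by norm_num) (by norm_num)

lemma exists_two_roots (hsplit : IsSplittingField ℚ E (X ^ 3 - C 5)) :
    ∃ a b : E, a ^ 3 = 5 ∧ b ^ 3 = 5 ∧ a ≠ b := by
  have hcard := card_rootSet_eq_natDegree separable_five hsplit.splits
  rw [natDegree_X_pow_sub_C] at hcard
  obtain ⟨⟨a, ha⟩, ⟨b, hb⟩, hab⟩ := Fintype.exists_pair_of_one_lt_card (hcard ▸ (by norm_num : 1 < 3))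
  exact ⟨a, b, mem_rootSet_iff.1 ha, mem_rootSet_iff.1 hb, fun h ↦ hab (Subtype.ext h)⟩

lemma eq_one_of_fix (hsplit : IsSplittingField ℚ E (X ^ 3 - C 5)) {a b : E} (ha : a ^ 3 = 5)
    (hb : b ^ 3 = 5) (hab : a ≠ b) {τ : Gal(E/ℚ)} (hτa : τ a = a) (hτb : τ b = b) : τ = 1 := by
  have h : (τ : E →ₐ[ℚ] E) = AlgHom.id ℚ E := by
    refine AlgHom.ext_of_adjoin_eq_top hsplit.adjoin_rootSet fun c hc ↦ ?_
    rw [mem_rootSet_iff] at hc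
    change τ c = c
    by_cases hca : c = a
    · rw [hca, hτa]
    by_cases hcb : c = b
    · rw [hcb, hτb]
    rw [third_root ha hb hc hab hca hcb, map_neg, map_add, hτa, hτb]
  ext x
  exact DFunLike.congr_fun h x

lemma map_other_root (hsplit : IsSplittingField ℚ E (X ^ 3 - C 5)) {a b : E} (ha : a ^ 3 = 5)
    (hb : b ^ 3 = 5) (hab : a ≠ b) {τ : Gal(E/ℚ)} (hτ : τ ≠ 1) (hτa : τ a = a) :
    τ b = -(a + b) := by
  refine third_root ha hb (by rw [← map_pow, hb, map_ofNat]) hab (fun h ↦ hab ?_) fun h ↦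
    hτ (eq_one_of_fix hsplit ha hb hab hτa h)
  exact τ.injective (hτa.trans h.symm)

open IntermediateField in
lemma exists_inverting_involution (hdeg : Module.finrank ℚ E = 6) [IsGalois ℚ E] {a : E}
    (ha : a ^ 3 = 5) : ∃ τ : Gal(E/ℚ), τ ≠ 1 ∧ τ a = a ∧
      ∀ I, ClassGroup.mk0 (conj τ I) = (ClassGroup.mk0 I)⁻¹ := by
  have h3 := finrank_adjoin ha
  have h2 : Module.finrank ℚ⟮a⟯ E = 2 := by
    have := Module.finrank_mul_finrank ℚ ℚ⟮a⟯ E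
    rw [h3, hdeg] at this
    omega
  have : IsPrincipalIdealRing (𝓞 ℚ⟮a⟯) := isPrincipalIdealRing_cubic h3
    (α := AdjoinSimple.gen ℚ a) (Subtype.ext ha)
  obtain ⟨τ, hτ, hfix, hcl⟩ := exists_involution ℚ⟮a⟯ h2
  exact ⟨τ, hτ, hfix a (mem_adjoin_simple_self ℚ a), hcl⟩

end

open IntermediateField in
lemma classGroup_pow_three (E : Type*) [Field E] [NumberField E]
    (hsplit : IsSplittingField ℚ E (X ^ 3 - C 5))
    (hdeg : Module.finrank ℚ E = 6) (c : ClassGroup (𝓞 E)) : c ^ 3 = 1 := by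
  have : IsGalois ℚ E := IsGalois.of_separable_splitting_field separable_five
  obtain ⟨a, b, ha, hb, hab⟩ := exists_two_roots hsplit
  have hq := quad_eq_zero ha hb hab
  have ha0 : a ≠ 0 := by rintro rfl; norm_num at ha
  have hb0 : b ≠ 0 := by rintro rfl; norm_num at hb
  obtain ⟨τ, hτ, hτa, hcl⟩ := exists_inverting_involution hdeg ha
  obtain ⟨τ', hτ', hτb', hcl'⟩ := exists_inverting_involution hdeg hb
  have hτb : τ b = -(a + b) := map_other_root hsplit ha hb hab hτ hτa
  have hτa' : τ' a = -(a + b) := by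
    rw [map_other_root hsplit hb ha hab.symm hτ' hτb', add_comm]
  -- `b / a` is a primitive cube root of unity, so `ℚ⟮b / a⟯` is `ℚ(ζ₃)`.
  have hω : IsPrimitiveRoot (b / a) 3 := by
    have : Fact (Nat.Prime 3) := ⟨by norm_num⟩
    have : orderOf (b / a) = 3 := by
      refine orderOf_eq_prime (by rw [div_pow, ha, hb]; norm_num) fun h ↦ hab ?_
      rw [div_eq_one_iff_eq ha0] at h
      exact h.symm
    exact this ▸ IsPrimitiveRoot.orderOf (b / a)
  have : IsCyclotomicExtension {3} ℚ ℚ⟮b / a⟯ :=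
    hω.intermediateField_adjoin_isCyclotomicExtension ℚ
  have : IsPrincipalIdealRing (𝓞 ℚ⟮b / a⟯) := IsCyclotomicExtension.Rat.three_pid _
  have h3 : Module.finrank ℚ⟮b / a⟯ E = 3 := by
    have h2 : Module.finrank ℚ ℚ⟮b / a⟯ = 2 :=
      IsCyclotomicExtension.finrank (n := 3) _ (cyclotomic.irreducible_rat (by norm_num))
    have := Module.finrank_mul_finrank ℚ ℚ⟮b / a⟯ E
    rw [h2, hdeg] at this
    omega
  refine pow_three_eq_one ℚ⟮b / a⟯ h3 (τ := τ) (τ' := τ') (fun h ↦ ?_) (fun x hx ↦ ?_) hcl hcl' c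
  · have h1 : τ (τ' b) = b := DFunLike.congr_fun h b
    rw [hτb', hτb] at h1
    have h3b : 3 * b ^ 2 = 0 := by linear_combination hq + (a - b) * h1
    simp [hb0] at h3b
  · have hgen : (τ * τ') (b / a) = b / a := by
      have hba : -(a + -(a + b)) = b := by ring
      rw [AlgEquiv.mul_apply, map_div₀, map_div₀, hτb', hτa', map_neg, map_add, hτa, hτb, hba,
        div_eq_div_iff hb0 ha0]
      linear_combination -hq
    induction hx using adjoin_induction with
    | mem y hy => rw [Set.mem_singleton_iff.1 hy, hgen]
    | algebraMap r => exact AlgEquiv.commutes _ r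
    | add y z _ _ hy hz => rw [map_add, hy, hz]
    | inv y _ hy => rw [map_inv₀, hy]
    | mul y z _ _ hy hz => rw [map_mul, hy, hz]

end CubicFive

/-- The splitting field `E = ℚ(ζ₃, ∛5)` of `x³ − 5`, of degree 6 over `ℚ`,
has odd class number. -/
theorem classNumber_splittingField_cubic_five_odd
    (E : Type) [Field E] [NumberField E]
    (hsplit : IsSplittingField ℚ E (X ^ 3 - C 5))
    (hdeg : Module.finrank ℚ E = 6) :
    Odd (NumberField.classNumber E) := by
  rw [← Nat.not_even_iff_odd, even_iff_two_dvd, NumberField.classNumber]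
  intro h2
  obtain ⟨c, hc⟩ := exists_prime_orderOf_dvd_card 2 h2
  have h3 := orderOf_dvd_of_pow_eq_one (CubicFive.classGroup_pow_three E hsplit hdeg c)
  rw [hc] at h3
  norm_num at h3
end

section
/- The class number of the number field ℚ(i, √7) = ℚ(μ_4, √7), a degree 4 extension of ℚ obtained by adjoining a primitive 4th root of unity and a square root of 7, is equal to 1. -/
/-!
Write `w = (1 + √-7) / 2` with `√-7 = i√7`, so that `w ^ 2 = w - 2`. The family
`1, i, w, iw` is a `ℚ`-basis of `K` consisting of integers, with discriminant `784 = 28 ^ 2`.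
Hence `discr K` divides `784`; whether the family is an integral basis does not matter, since
only an upper bound is needed. The Minkowski bound is then at most
`(4 / π) ^ 2 * (4! / 4 ^ 4) * 28 < 5`, so it suffices to show that every nonzero prime ideal `P`
of norm at most `4` is principal (`isPrincipal_of_absNorm_le`).

* Norm `3` is impossible: `-1` is not a square in the field with three elements.
* Otherwise `2 ∈ P`. Since `(1 + iw)(1 + i(1 - w)) = i - 1` and `2 = i(i - 1) ^ 2`, the ideal `P`
  contains `1 + iw` or its conjugate `1 + i(1 - w)`. Both have norm `2`, so they generate maximal
  ideals and `P` is one of these.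
-/

open NumberField

namespace QISqrtSeven

theorem rat_sq_seven {u w : ℚ} (h : u ^ 2 = 7 * w ^ 2) : w = 0 := by
  by_contra hw
  have h7 : IsSquare (7 : ℚ) := ⟨u / w, by field_simp; linarith⟩
  have : IsSquare (7 : ℕ) := Rat.isSquare_natCast_iff.mp (by exact_mod_cast h7)
  exact (show Nat.Prime 7 by norm_num).prime.not_isSquare this

section Field
variable {K : Type} [Field K] [CharZero K]

theorem one_i_indep {i : K} (hi : i ^ 2 = -1) {a b : ℚ} (h : (a : K) + b * i = 0) :
    a = 0 ∧ b = 0 := by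
  have h1 : (a : K) ^ 2 + b ^ 2 = 0 := by linear_combination (a - b * i) * h + b ^ 2 * hi
  have h2 : a ^ 2 + b ^ 2 = 0 := by exact_mod_cast h1
  constructor <;> nlinarith [sq_nonneg a, sq_nonneg b]

/-- Linear independence of `1, i, √7, i√7` over `ℚ`. -/
theorem four_indep {i β : K} (hi : i ^ 2 = -1) (hβ : β ^ 2 = 7) {a b c d : ℚ}
    (h : (a : K) + b * i + (c + d * i) * β = 0) : a = 0 ∧ b = 0 ∧ c = 0 ∧ d = 0 := by
  -- Multiplying by `c - d * i` isolates `(c ^ 2 + d ^ 2) * β`; squaring then gives a relation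
  -- between `1` and `i` only.
  have key : c ^ 2 + d ^ 2 = 0 := by
    have h1 : (((a * c + b * d) ^ 2 - (b * c - a * d) ^ 2 - 7 * (c ^ 2 + d ^ 2) ^ 2 : ℚ) : K) +
        ((2 * (a * c + b * d) * (b * c - a * d) : ℚ) : K) * i = 0 := by
      push_cast
      have e : ((a : K) * c + b * d) + (b * c - a * d) * i = - (c ^ 2 + d ^ 2) * β := by
        linear_combination (c - d * i) * h + (d ^ 2 * β + b * d) * hi
      linear_combination (((a : K) * c + b * d) + (b * c - a * d) * i - (c ^ 2 + d ^ 2) * β) * e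
        - (b * c - a * d) ^ 2 * hi + (c ^ 2 + d ^ 2) ^ 2 * hβ
    obtain ⟨h2, h3⟩ := one_i_indep hi h1
    have h4 : (a * c + b * d) = 0 ∨ (b * c - a * d) = 0 := by
      rcases mul_eq_zero.mp h3 with h | h
      · left; linarith
      · right; exact h
    rcases h4 with h4 | h4
    · rw [h4] at h2
      have : (c ^ 2 + d ^ 2) ^ 2 = 0 := by
        nlinarith [sq_nonneg (b * c - a * d), sq_nonneg (c ^ 2 + d ^ 2)]
      exact pow_eq_zero_iff (two_ne_zero) |>.mp this
    · rw [h4] at h2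
      exact rat_sq_seven (u := a * c + b * d) (by linarith)
  have hc : c = 0 := by nlinarith [sq_nonneg c, sq_nonneg d]
  have hd : d = 0 := by nlinarith [sq_nonneg c, sq_nonneg d]
  subst hc hd
  obtain ⟨ha, hb⟩ := one_i_indep hi (a := a) (b := b) (by simpa using h)
  exact ⟨ha, hb, rfl, rfl⟩

theorem linearIndependent_family {i w : K} (hi : i ^ 2 = -1) (hw : w ^ 2 = w - 2) :
    LinearIndependent ℚ ![1, i, w, i * w] := by
  rw [Fintype.linearIndependent_iff]
  intro g hg
  -- `√7 = -i√-7 = -i(2w - 1)`.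
  have hβ : (-i * (2 * w - 1)) ^ 2 = 7 := by
    linear_combination (2 * w - 1) ^ 2 * hi - 4 * hw
  simp only [Fin.sum_univ_four, Matrix.cons_val, Rat.smul_def] at hg
  have := four_indep hi hβ (a := g 0 + g 2 / 2) (b := g 1 + g 3 / 2) (c := -g 3 / 2)
    (d := g 2 / 2) (by
      push_cast
      linear_combination hg - (g 2 * (2 * w - 1) / 2) * hi)
  obtain ⟨h0, h1, h2, h3⟩ := this
  intro j
  fin_cases j <;> simp only [Fin.zero_eta, Fin.mk_one, Fin.reduceFinMk] <;> linarith

end Field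

section NumberField
variable {K : Type} [Field K] [NumberField K]

theorem exists_basis (hdeg : Module.finrank ℚ K = 4) {i w : K} (hi : i ^ 2 = -1)
    (hw : w ^ 2 = w - 2) :
    ∃ b : Module.Basis (Fin 4) ℚ K, ⇑b = ![1, i, w, i * w] :=
  ⟨basisOfLinearIndependentOfCardEqFinrank (linearIndependent_family hi hw) (by simp [hdeg]),
    coe_basisOfLinearIndependentOfCardEqFinrank _ _⟩

theorem leftMulMatrix_eq {b : Module.Basis (Fin 4) ℚ K} {i w : K} (hi : i ^ 2 = -1)
    (hw : w ^ 2 = w - 2) (hb : ⇑b = ![1, i, w, i * w]) (p q r s : ℚ) :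
    Algebra.leftMulMatrix b (p + q * i + r * w + s * (i * w)) =
      !![p, -q, -2 * r, 2 * s;
         q, p, -2 * s, -2 * r;
         r, -s, p + r, -(q + s);
         s, r, q + s, p + r] := by
  ext j k
  rw [Algebra.leftMulMatrix_eq_repr_mul]
  set M : Matrix (Fin 4) (Fin 4) ℚ := !![p, -q, -2 * r, 2 * s;
         q, p, -2 * s, -2 * r;
         r, -s, p + r, -(q + s);
         s, r, q + s, p + r] with hM
  have : (p + q * i + r * w + s * (i * w)) * b k = ∑ l, M l k • b l := by
    simp only [Fin.sum_univ_four, hb, hM, Rat.smul_def]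
    fin_cases k <;> simp
    · linear_combination (q + s * w) * hi
    · linear_combination (r + s * i) * hw
    · linear_combination (q * w + s * w ^ 2) * hi + (r * i - s) * hw
  rw [this, b.repr_sum_self]

theorem trace_eq (hdeg : Module.finrank ℚ K = 4) {i w : K} (hi : i ^ 2 = -1)
    (hw : w ^ 2 = w - 2) (p q r s : ℚ) :
    Algebra.trace ℚ K (p + q * i + r * w + s * (i * w)) = 4 * p + 2 * r := by
  obtain ⟨b, hb⟩ := exists_basis hdeg hi hw
  rw [Algebra.trace_eq_matrix_trace b, leftMulMatrix_eq hi hw hb]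
  simp [Matrix.trace, Fin.sum_univ_four]
  ring

theorem norm_one_add (hdeg : Module.finrank ℚ K = 4) {i w : K} (hi : i ^ 2 = -1)
    (hw : w ^ 2 = w - 2) :
    Algebra.norm ℚ (1 + i * w) = 2 := by
  obtain ⟨b, hb⟩ := exists_basis hdeg hi hw
  have := leftMulMatrix_eq hi hw hb 1 0 0 1
  simp only [Rat.cast_one, Rat.cast_zero, zero_mul, add_zero, one_mul] at this
  rw [Algebra.norm_eq_matrix_det b, this]
  simp [Matrix.det_succ_row_zero, Fin.sum_univ_succ, Fin.succAbove]
  norm_num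

theorem discr_family (hdeg : Module.finrank ℚ K = 4) {i w : K} (hi : i ^ 2 = -1)
    (hw : w ^ 2 = w - 2) : Algebra.discr ℚ ![1, i, w, i * w] = 784 := by
  have hm : Algebra.traceMatrix ℚ ![1, i, w, i * w] =
      !![4, 0, 2, 0; 0, -4, 0, -2; 2, 0, -6, 0; 0, -2, 0, 6] := by
    have T := trace_eq hdeg hi hw
    have h (x : K) (p q r s : ℚ) (hx : x = p + q * i + r * w + s * (i * w)) :
        Algebra.trace ℚ K x = 4 * p + 2 * r := hx ▸ T p q r s
    ext j k
    rw [Algebra.traceMatrix_apply, Algebra.traceForm_apply]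
    fin_cases j <;> fin_cases k <;> simp only [Fin.zero_eta, Fin.mk_one, Fin.reduceFinMk,
      Matrix.cons_val, Matrix.of_apply]
    · rw [h _ 1 0 0 0 (by push_cast; ring)]; norm_num
    · rw [h _ 0 1 0 0 (by push_cast; ring)]; norm_num
    · rw [h _ 0 0 1 0 (by push_cast; ring)]; norm_num
    · rw [h _ 0 0 0 1 (by push_cast; ring)]; norm_num
    · rw [h _ 0 1 0 0 (by push_cast; ring)]; norm_num
    · rw [h _ (-1) 0 0 0 (by push_cast; linear_combination hi)]; norm_num
    · rw [h _ 0 0 0 1 (by push_cast; ring)]; norm_num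
    · rw [h _ 0 0 (-1) 0 (by push_cast; linear_combination w * hi)]; norm_num
    · rw [h _ 0 0 1 0 (by push_cast; ring)]; norm_num
    · rw [h _ 0 0 0 1 (by push_cast; ring)]; norm_num
    · rw [h _ (-2) 0 1 0 (by push_cast; linear_combination hw)]; norm_num
    · rw [h _ 0 (-2) 0 1 (by push_cast; linear_combination i * hw)]; norm_num
    · rw [h _ 0 0 0 1 (by push_cast; ring)]; norm_num
    · rw [h _ 0 0 (-1) 0 (by push_cast; linear_combination w * hi)]; norm_num
    · rw [h _ 0 (-2) 0 1 (by push_cast; linear_combination i * hw)]; norm_num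
    · rw [h _ 2 0 (-1) 0 (by push_cast; linear_combination w ^ 2 * hi - hw)]; norm_num
  rw [Algebra.discr_def, hm]
  simp [Matrix.det_succ_row_zero, Fin.sum_univ_succ, Fin.succAbove]
  norm_num

/-- The discriminant `784` of the integral family `1, i, w, iw` is the square of an integer
(the determinant in terms of an integral basis) times `discr K`. -/
theorem abs_discr_le (hdeg : Module.finrank ℚ K = 4) {i w : 𝓞 K} (hi : i ^ 2 = -1)
    (hw : w ^ 2 = w - 2) : |discr K| ≤ 784 := by
  have hiK : (i : K) ^ 2 = -1 := by exact_mod_cast congrArg (algebraMap (𝓞 K) K) hi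
  have hwK : (w : K) ^ 2 = w - 2 := by
    simpa only [map_pow, map_sub, map_ofNat] using congrArg (algebraMap (𝓞 K) K) hw
  let e : Fin 4 → 𝓞 K := ![1, i, w, i * w]
  have he : Algebra.discr ℤ e = 784 := by
    have h := discr_family hdeg hiK hwK
    have : ((Algebra.discr ℤ e : ℤ) : ℚ) = Algebra.discr ℚ ![1, (i : K), w, i * w] := by
      rw [Algebra.discr_def, Algebra.discr_def, Int.cast_det]
      congr 1
      ext j k
      simp only [Matrix.map_apply, Algebra.traceMatrix_apply, Algebra.traceForm_apply,
        Algebra.coe_trace_int]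
      congr 1
      fin_cases j <;> fin_cases k <;> simp [e]
    rw [h] at this
    exact_mod_cast this
  let B := Module.finBasisOfFinrankEq ℤ (𝓞 K) ((RingOfIntegers.rank K).trans hdeg)
  have h := Algebra.discr_of_matrix_vecMul B (B.toMatrix e)
  rw [Module.Basis.toMatrix_map_vecMul, he, NumberField.discr_eq_discr] at h
  have hd : discr K ∣ 784 := ⟨_, by rw [h, mul_comm]⟩
  exact Int.le_of_dvd (by norm_num) ((abs_dvd _ _).mpr hd)

open scoped nonZeroDivisors Real
open InfinitePlace Nat in
/-- The number of complex places is only bounded by `2`, which suffices because `4 / π ≥ 1`. -/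
theorem minkowski_lt (hdeg : Module.finrank ℚ K = 4) (hd : |discr K| ≤ 784) :
    (4 / π) ^ nrComplexPlaces K * ((Module.finrank ℚ K)! / (Module.finrank ℚ K) ^
      (Module.finrank ℚ K) * √|discr K|) < 5 := by
  have hr : nrComplexPlaces K ≤ 2 := by
    have := card_add_two_mul_card_eq_rank K
    omega
  have hs : √|discr K| ≤ 28 := by
    rw [Real.sqrt_le_left (by norm_num)]
    have : ((|discr K| : ℤ) : ℝ) ≤ 784 := by exact_mod_cast hd
    push_cast at this
    linarith
  have hp : (4 / π) ^ nrComplexPlaces K ≤ (4 / 3) ^ 2 :=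
    (pow_le_pow_right₀ ((one_le_div Real.pi_pos).mpr Real.pi_le_four) hr).trans
      (by gcongr; exact Real.pi_gt_three.le)
  rw [hdeg]
  calc _ ≤ (4 / 3 : ℝ) ^ 2 * ((4 ! : ℕ) / (4 : ℕ) ^ 4 * 28) := by gcongr
    _ < 5 := by norm_num [Nat.factorial]

theorem isPrincipal_of_mem_of_absNorm_eq_two {P : Ideal (𝓞 K)} (hP : P ≠ ⊤) {x : 𝓞 K}
    (hx : Ideal.absNorm (Ideal.span {x}) = 2) (h : x ∈ P) : P.IsPrincipal := by
  have hprime : (Ideal.span {x}).IsPrime :=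
    Ideal.isPrime_of_irreducible_absNorm (by rw [hx]; exact Nat.prime_two)
  have hmax : (Ideal.span {x}).IsMaximal := hprime.isMaximal (by
    intro h0; rw [h0] at hx; simp at hx)
  exact ⟨x, (hmax.eq_of_le hP ((Ideal.span_singleton_le_iff_mem _).mpr h)).symm⟩

theorem absNorm_one_add (hdeg : Module.finrank ℚ K = 4) {i w : 𝓞 K} (hi : i ^ 2 = -1)
    (hw : w ^ 2 = w - 2) : Ideal.absNorm (Ideal.span {1 + i * w}) = 2 := by
  have hiK : (i : K) ^ 2 = -1 := by exact_mod_cast congrArg (algebraMap (𝓞 K) K) hi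
  have hwK : (w : K) ^ 2 = w - 2 := by
    simpa only [map_pow, map_sub, map_ofNat] using congrArg (algebraMap (𝓞 K) K) hw
  have h := norm_one_add hdeg hiK hwK
  have h2 : Algebra.norm ℤ (1 + i * w) = 2 := by
    have := Algebra.coe_norm_int (1 + i * w)
    push_cast at this
    rw [h] at this
    exact_mod_cast this
  rw [Ideal.absNorm_span_singleton, h2]; rfl

theorem isPrincipal_of_absNorm_le (hdeg : Module.finrank ℚ K = 4) {i w : 𝓞 K} (hi : i ^ 2 = -1)
    (hw : w ^ 2 = w - 2) {P : Ideal (𝓞 K)} (hP : P.IsPrime) (hP0 : P ≠ ⊥)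
    (hle : Ideal.absNorm P ≤ 4) : P.IsPrincipal := by
  have two : (2 : 𝓞 K) ∈ P → P.IsPrincipal := by
    intro h2
    have e : (2 : 𝓞 K) = i * ((1 + i * w) * (1 + i * (1 - w))) ^ 2 := by
      have : (1 + i * w) * (1 + i * (1 - w)) = i - 1 := by
        linear_combination (w - w ^ 2) * hi + hw
      rw [this]
      linear_combination (2 - i) * hi
    rw [e] at h2
    rcases hP.mem_or_mem h2 with h | h
    · exact absurd (P.eq_top_iff_one.mpr (by
        have := P.mul_mem_left (-i) h
        rwa [show -i * i = 1 by linear_combination -hi] at this)) hP.ne_top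
    · rcases hP.mem_or_mem (hP.mem_of_pow_mem _ h) with h | h
      · exact isPrincipal_of_mem_of_absNorm_eq_two hP.ne_top (absNorm_one_add hdeg hi hw) h
      · exact isPrincipal_of_mem_of_absNorm_eq_two hP.ne_top
          (absNorm_one_add hdeg hi (w := 1 - w) (by linear_combination hw)) h
  have hmem := Ideal.absNorm_mem P
  have h0 : Ideal.absNorm P ≠ 0 := fun h => hP0 (Ideal.absNorm_eq_zero_iff.mp h)
  have h1 : Ideal.absNorm P ≠ 1 := fun h => hP.ne_top (Ideal.absNorm_eq_one_iff.mp h)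
  obtain h | h | h : Ideal.absNorm P = 2 ∨ Ideal.absNorm P = 3 ∨ Ideal.absNorm P = 4 := by omega
  · rw [h] at hmem
    exact two (by exact_mod_cast hmem)
  · exfalso
    rw [h] at hmem
    have hmax := hP.isMaximal hP0
    let := Ideal.Quotient.field P
    have hc : Nat.card (𝓞 K ⧸ P) = 3 := by
      rw [← h, Ideal.absNorm_apply, Submodule.cardQuot_apply]
    have : Finite (𝓞 K ⧸ P) := Nat.finite_of_card_ne_zero (by omega)
    let := Fintype.ofFinite (𝓞 K ⧸ P)
    have hf := FiniteField.pow_card (Ideal.Quotient.mk P i)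
    rw [← Nat.card_eq_fintype_card, hc, ← map_pow, Ideal.Quotient.eq] at hf
    -- In the residue field `i ^ 3 = i`, hence `2 = i * (i ^ 3 - i) = 0`, while also `3 = 0`.
    apply hP.ne_top
    rw [Ideal.eq_top_iff_one]
    have h3 : (3 : 𝓞 K) ∈ P := by exact_mod_cast hmem
    have := P.add_mem h3 (P.mul_mem_left (-i) hf)
    rwa [show (3 : 𝓞 K) + -i * (i ^ 3 - i) = 1 by
      linear_combination (2 - i ^ 2) * hi] at this
  · rw [h] at hmem
    refine two (hP.mem_of_pow_mem 2 ?_)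
    norm_num
    exact_mod_cast hmem

end NumberField
end QISqrtSeven

/-- The class number of `ℚ(i, √7)`, the degree-4 field obtained by adjoining a primitive
4th root of unity and a square root of 7, is 1. -/
theorem classNumber_Q_i_sqrt_seven
    (K : Type) [Field K] [NumberField K] (hdeg : Module.finrank ℚ K = 4)
    (hi : ∃ α : K, α ^ 2 = -1) (h7 : ∃ β : K, β ^ 2 = 7) :
    NumberField.classNumber K = 1 := by
  obtain ⟨α, hα⟩ := hi
  obtain ⟨β, hβ⟩ := h7
  have hω : ((1 + α * β) / 2) ^ 2 = (1 + α * β) / 2 - 2 := by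
    linear_combination (β ^ 2 / 4) * hα - hβ / 4
  have hαi : IsIntegral ℤ α := by
    refine .of_pow (n := 2) (by norm_num) ?_
    rw [hα]
    exact isIntegral_one.neg
  have hωi : IsIntegral ℤ ((1 + α * β) / 2) := by
    refine ⟨Polynomial.X ^ 2 - Polynomial.X + Polynomial.C 2, by monicity!, ?_⟩
    simp only [Polynomial.eval₂_add, Polynomial.eval₂_sub, Polynomial.eval₂_X_pow,
      Polynomial.eval₂_X, Polynomial.eval₂_C, hω]
    simp
  obtain ⟨i, rfl⟩ : ∃ i : 𝓞 K, (i : K) = α := ⟨⟨α, hαi⟩, rfl⟩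
  obtain ⟨w, hw⟩ : ∃ w : 𝓞 K, (w : K) = (1 + i * β) / 2 := ⟨⟨_, hωi⟩, rfl⟩
  rw [← hw] at hω
  have hi' : i ^ 2 = -1 := by
    apply RingOfIntegers.coe_injective
    simpa using hα
  have hw' : w ^ 2 = w - 2 := by
    apply RingOfIntegers.coe_injective
    simpa only [map_pow, map_sub, map_ofNat] using hω
  rw [classNumber_eq_one_iff]
  refine RingOfIntegers.isPrincipalIdealRing_of_isPrincipal_of_norm_le_of_isPrime
    fun I hI hN => ?_
  have hlt := hN.trans_lt (QISqrtSeven.minkowski_lt hdeg (QISqrtSeven.abs_discr_le hdeg hi' hw'))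
  have hlt' : Ideal.absNorm (I : Ideal (𝓞 K)) < 5 := by exact_mod_cast hlt
  exact QISqrtSeven.isPrincipal_of_absNorm_le hdeg hi' hw' hI (nonZeroDivisors.coe_ne_zero I)
    (by omega)
end

section
/- Let E = ℚ(ζ_3, ∛5) be the splitting field over ℚ of the polynomial x³ − 5, a number field of degree 6 over ℚ. Then the absolute value of the discriminant of E over ℚ equals 3⁷ · 5⁴. -/
/-!
Let `K = ℚ(ρ)` with `ρ ^ 3 = 5`, so that `[E : K] = 2` and `|d_E| = N(𝔡_{E/K}) · d_K ^ 2`. The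
two factors are `|d_K| = 3 ^ 3 * 5 ^ 2` and `N(𝔡_{E/K}) = 3`.

*The cubic field* (`natAbs_discr_cubic`). By the conductor formula, the different of `K` times the
conductor of `ℤ[ρ]` is generated by `3 * ρ ^ 2`; in particular `15 = 3 * ρ ^ 2 * ρ` multiplies
`𝓞 K` into `ℤ[ρ]`. The minimal polynomial of `ρ` is Eisenstein at `5`, and that of `ρ - 2`, namely
`X ^ 3 + 6 X ^ 2 + 12 X + 3`, is Eisenstein at `3`, so neither prime divides the index and
`𝓞 K = ℤ[ρ]`. Hence `|d_K| = N(3 * ρ ^ 2) = 27 * 25`.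

*The relative different* (`absNorm_differentIdeal_sextic`). Put `y = ρ - 2`. Then
`y ^ 3 * w = -3` for the unit `w = 14 ρ ^ 2 + 24 ρ + 41`, so `y` generates the prime of `K` above
`3`. The element `α = √-3 / y` satisfies `α ^ 2 = y * w`, so `(α) ^ 2 = (y)` and `(α)`, of norm `3`,
divides the different because it is ramified. Conversely `π = (ζ - 1) / y` is an integral generator
of `E / K` and its minimal polynomial has derivative `α` at `π`, so `α` lies in the different.
Thus `𝔡_{E/K} = (α)`.
-/

open NumberField Polynomial
theorem isEisensteinAt_cubic {p : ℤ} (hp : Prime p) {a b c : ℤ} (ha : p ∣ a) (hb : p ∣ b)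
    (hc : p ∣ c) (hc' : ¬ p ^ 2 ∣ c) :
    (X ^ 3 + C a * X ^ 2 + C b * X + C c : ℤ[X]).IsEisensteinAt (Submodule.span ℤ {p}) := by
  have hdeg : (X ^ 3 + C a * X ^ 2 + C b * X + C c : ℤ[X]).natDegree = 3 := by compute_degree!
  refine ⟨?_, ?_, ?_⟩
  · rw [leadingCoeff, hdeg]
    simpa [-eq_intCast, coeff_X, coeff_C, coeff_X_pow, Ideal.mem_span_singleton] using hp.not_dvd_one
  · intro n hn
    rw [hdeg] at hn
    interval_cases n <;> simpa [-eq_intCast, coeff_X, coeff_C, coeff_X_pow, Ideal.mem_span_singleton]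
  · simpa [Ideal.span_singleton_pow, coeff_X_pow, Ideal.mem_span_singleton] using hc'

theorem minpoly_int_cubic {K : Type*} [Field K] [NumberField K]
    {p : ℤ} (hp : Prime p) {a b c : ℤ} (ha : p ∣ a) (hb : p ∣ b)
    (hc : p ∣ c) (hc' : ¬ p ^ 2 ∣ c) {x : K} (hx : x ^ 3 + a * x ^ 2 + b * x + c = 0) :
    IsIntegral ℤ x ∧ minpoly ℤ x = X ^ 3 + C a * X ^ 2 + C b * X + C c := by
  have hm : (X ^ 3 + C a * X ^ 2 + C b * X + C c : ℤ[X]).Monic := by monicity!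
  have hdeg : (X ^ 3 + C a * X ^ 2 + C b * X + C c : ℤ[X]).natDegree = 3 := by compute_degree!
  have hx' : aeval x (X ^ 3 + C a * X ^ 2 + C b * X + C c : ℤ[X]) = 0 := by simpa using hx
  have hint : IsIntegral ℤ x := ⟨_, hm, hx'⟩
  have hirr := (isEisensteinAt_cubic hp ha hb hc hc').irreducible
    ((Ideal.span_singleton_prime hp.ne_zero).2 hp) hm.isPrimitive (by omega)
  exact ⟨hint, eq_of_monic_of_associated (minpoly.monic hint) hm <|
    (minpoly.irreducible hint).associated_of_dvd hirr (minpoly.isIntegrallyClosed_dvd hint hx')⟩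

theorem natDegree_minpoly_rat_cubic {K : Type*} [Field K] [NumberField K]
    {p : ℤ} (hp : Prime p) {a b c : ℤ} (ha : p ∣ a) (hb : p ∣ b)
    (hc : p ∣ c) (hc' : ¬ p ^ 2 ∣ c) {x : K} (hx : x ^ 3 + a * x ^ 2 + b * x + c = 0) :
    (minpoly ℚ x).natDegree = 3 := by
  obtain ⟨hint, hmin⟩ := minpoly_int_cubic hp ha hb hc hc' hx
  rw [minpoly.isIntegrallyClosed_eq_field_fractions' ℚ hint, (minpoly.monic hint).natDegree_map,
    hmin]
  compute_degree!

theorem adjoin_rat_eq_top_of_cubic {K : Type*} [Field K] [NumberField K]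
    (hK : Module.finrank ℚ K = 3) {p : ℤ} (hp : Prime p) {a b c : ℤ} (ha : p ∣ a) (hb : p ∣ b)
    (hc : p ∣ c) (hc' : ¬ p ^ 2 ∣ c) {x : K} (hx : x ^ 3 + a * x ^ 2 + b * x + c = 0) :
    Algebra.adjoin ℚ {x} = ⊤ :=
  Algebra.adjoin_eq_top_of_primitive_element (Algebra.IsAlgebraic.isAlgebraic x)
    ((Field.primitive_element_iff_minpoly_natDegree_eq ℚ x).2
      ((natDegree_minpoly_rat_cubic hp ha hb hc hc' hx).trans hK.symm))

/-- The index of `ℤ[x]` is prime to `p` when `x` is a root of a cubic which is Eisenstein at `p`. -/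
theorem mem_adjoin_of_cubic {K : Type*} [Field K] [NumberField K] (hK : Module.finrank ℚ K = 3)
    {p : ℤ} (hp : Prime p) {a b c : ℤ} (ha : p ∣ a) (hb : p ∣ b)
    (hc : p ∣ c) (hc' : ¬ p ^ 2 ∣ c) {x : K}
    (hx : x ^ 3 + a * x ^ 2 + b * x + c = 0) {z : K} (hz : IsIntegral ℤ z)
    (hpz : p • z ∈ Algebra.adjoin ℤ {x}) : z ∈ Algebra.adjoin ℤ {x} := by
  obtain ⟨hint, hmin⟩ := minpoly_int_cubic hp ha hb hc hc' hx
  let B := PowerBasis.ofAdjoinEqTop (hint.tower_top (A := ℚ))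
    (adjoin_rat_eq_top_of_cubic hK hp ha hb hc hc' hx)
  have hB : B.gen = x := PowerBasis.ofAdjoinEqTop_gen _ _
  have := mem_adjoin_of_smul_prime_smul_of_minpoly_isEisensteinAt (B := B) (K := ℚ) hp
    (by rwa [hB]) hz (by rwa [hB]) (by rw [hB, hmin]; exact isEisensteinAt_cubic hp ha hb hc hc')
  rwa [hB] at this

/-- An element whose `n`-th power is `q` up to a unit, `n` being the degree, has norm `q`: compare
`N(y) ^ n = N(q) = q ^ n`. -/
theorem absNorm_eq_of_pow {K : Type*} [Field K] [NumberField K] {n : ℕ} (hn : n ≠ 0)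
    (hK : Module.finrank ℚ K = n) {q : ℕ} {y u : 𝓞 K} (hu : IsUnit u)
    (hy : y ^ n = q * u) : Ideal.absNorm (Ideal.span {y}) = q := by
  have h := congrArg (fun x : 𝓞 K => Ideal.absNorm (Ideal.span {x})) hy
  simp only [← Ideal.span_singleton_pow, map_pow] at h
  rw [Ideal.span_singleton_mul_right_unit hu, Ideal.absNorm_span_natCast, RingOfIntegers.rank, hK]
    at h
  exact Nat.pow_left_injective hn h

/-- The field `ℚ(∛5)` has discriminant `3 ^ 3 * 5 ^ 2` in absolute value. -/
theorem natAbs_discr_cubic {K : Type*} [Field K] [NumberField K] (hK : Module.finrank ℚ K = 3)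
    {r : 𝓞 K} (hr : r ^ 3 = 5) : (discr K).natAbs = 675 := by
  have hrK : (r : K) ^ 3 = 5 := by
    simpa only [map_pow, map_ofNat] using congrArg (algebraMap (𝓞 K) K) hr
  have hcub : (r : K) ^ 3 + (0 : ℤ) * (r : K) ^ 2 + (0 : ℤ) * (r : K) + (-5 : ℤ) = 0 := by
    push_cast
    linear_combination hrK
  have htop : Algebra.adjoin ℚ {(r : K)} = ⊤ :=
    adjoin_rat_eq_top_of_cubic hK (p := 5) (by norm_num)
      (by norm_num) (by norm_num) (by norm_num) (by norm_num) hcub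
  have hcd := conductor_mul_differentIdeal ℤ ℚ K r htop
  have hmin' : minpoly ℤ r = X ^ 3 + C 0 * X ^ 2 + C 0 * X + C (-5) := by
    rw [← (minpoly_int_cubic (p := 5) (by norm_num)
      (by norm_num) (by norm_num) (by norm_num) (by norm_num) hcub).2]
    exact (minpoly.algebraMap_eq (RingOfIntegers.coe_injective) r).symm
  have hder : aeval r (derivative (minpoly ℤ r)) = 3 * r ^ 2 := by
    rw [hmin']
    simp [map_ofNat (aeval r : ℤ[X] →ₐ[ℤ] 𝓞 K) 3]
  rw [hder] at hcd
  have hmem : 3 * r ^ 2 ∈ conductor ℤ r :=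
    (hcd ▸ Ideal.mul_le_left : Ideal.span {3 * r ^ 2} ≤ conductor ℤ r)
      (Ideal.mem_span_singleton_self _)
  have hadj : ∀ z : 𝓞 K, z ∈ Algebra.adjoin ℤ {r} ↔ (z : K) ∈ Algebra.adjoin ℤ {(r : K)} := by
    intro z
    have : Algebra.adjoin ℤ {(r : K)} =
        (Algebra.adjoin ℤ {r}).map (IsScalarTower.toAlgHom ℤ (𝓞 K) K) := by
      rw [AlgHom.map_adjoin]; simp
    rw [this]
    constructor
    · intro h; exact ⟨z, h, rfl⟩
    · rintro ⟨w, h, hw⟩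
      have : w = z := RingOfIntegers.coe_injective hw
      exact this ▸ h
  have hshift : Algebra.adjoin ℤ {(r : K) - 2} = Algebra.adjoin ℤ {(r : K)} := by
    apply le_antisymm <;> refine Algebra.adjoin_le (Set.singleton_subset_iff.2 ?_)
    · exact sub_mem (Algebra.self_mem_adjoin_singleton ℤ _) (ofNat_mem _ 2)
    · have := add_mem (Algebra.self_mem_adjoin_singleton ℤ ((r : K) - 2)) (ofNat_mem _ 2)
      simpa using this
  have hall : Algebra.adjoin ℤ {r} = ⊤ := by
    rw [eq_top_iff]
    rintro z -
    -- `3 * r ^ 2` is in the conductor, and `15 = r * (3 * r ^ 2)`.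
    have h15 : (15 : ℤ) • z ∈ Algebra.adjoin ℤ {r} := by
      have h1 := mul_mem (Algebra.self_mem_adjoin_singleton ℤ r) (mem_conductor_iff.1 hmem z)
      convert h1 using 1
      rw [zsmul_eq_mul]
      push_cast
      linear_combination (-3 * z) * hr
    rw [hadj] at h15 ⊢
    have h3 : (3 : ℤ) • (z : K) ∈ Algebra.adjoin ℤ {(r : K)} := by
      refine mem_adjoin_of_cubic hK (p := 5) (a := 0) (b := 0) (c := -5) (by norm_num)
        (by norm_num) (by norm_num) (by norm_num) (by norm_num) hcub (z.2.smul _) ?_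
      convert h15 using 1
      rw [smul_smul, show (5 * 3 : ℤ) = 15 by norm_num]
      exact (map_zsmul (algebraMap (𝓞 K) K) 15 z).symm
    rw [← hshift] at h3 ⊢
    refine mem_adjoin_of_cubic hK (p := 3) (a := 6) (b := 12) (c := 3) (by norm_num)
        (by norm_num) (by norm_num) (by norm_num) (by norm_num) ?_ z.2 h3
    push_cast; linear_combination hrK
  rw [conductor_eq_top_of_adjoin_eq_top hall, Ideal.top_mul] at hcd
  have h5 : Ideal.absNorm (Ideal.span {r}) = 5 :=
    absNorm_eq_of_pow (by norm_num) hK isUnit_one (by simpa using hr)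
  have h3 : Ideal.absNorm (Ideal.span {(3 : 𝓞 K)}) = 27 := by
    have := Ideal.absNorm_span_natCast (S := 𝓞 K) 3
    rw [RingOfIntegers.rank, hK] at this
    exact_mod_cast this
  rw [← absNorm_differentIdeal K (𝓞 K), hcd, ← Ideal.span_singleton_mul_span_singleton,
    ← Ideal.span_singleton_pow, map_mul, map_pow, h5, h3]
  norm_num

/-- The inverse of the unit is `2 r ^ 2 - 4 r + 1 = -(r - 2) ^ 3 / 3`. -/
theorem isUnit_aux {R : Type*} [CommRing R] {r : R} (hr : r ^ 3 = 5) :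
    IsUnit (14 * r ^ 2 + 24 * r + 41) :=
  IsUnit.of_mul_eq_one (2 * r ^ 2 - 4 * r + 1) (by linear_combination (28 * r - 8) * hr)

/-- The relative different of `ℚ(∛5, ζ₃) / ℚ(∛5)` has norm `3`: it is generated by
`(2 * ζ + 1) / (r - 2)`. -/
theorem absNorm_differentIdeal_sextic {K L : Type*} [Field K] [NumberField K] [Field L]
    [NumberField L] [Algebra K L] (hK : Module.finrank ℚ K = 3) (hL : Module.finrank ℚ L = 6)
    {r : 𝓞 K} (hr : r ^ 3 = 5) {ζ : L} (hζ : ζ ^ 2 + ζ + 1 = 0) :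
    Ideal.absNorm (differentIdeal (𝓞 K) (𝓞 L)) = 3 := by
  have hKL : Module.finrank K L = 2 := by
    have := Module.finrank_mul_finrank ℚ K L
    rw [hK, hL] at this
    omega
  -- `ζ` has degree `2` over `ℚ`, which does not divide `[K : ℚ] = 3`.
  have hζK : ∀ x : K, algebraMap K L x ≠ ζ := by
    rintro x rfl
    have hx : x ^ 2 + x + 1 = 0 := by
      apply (algebraMap K L).injective; simpa using hζ
    have hprim : IsPrimitiveRoot x 3 := by
      rw [← orderOf_eq_prime (p := 3) (x := x) (by linear_combination (x - 1) * hx) (by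
        rintro rfl; norm_num at hx)]
      exact IsPrimitiveRoot.orderOf x
    have h := minpoly.degree_dvd (hprim.isIntegral (by norm_num)).tower_top (K := ℚ)
    rw [← cyclotomic_eq_minpoly_rat hprim (by norm_num), natDegree_cyclotomic, hK] at h
    revert h
    decide
  set y : 𝓞 K := r - 2 with hy
  set w : 𝓞 K := 14 * r ^ 2 + 24 * r + 41 with hw
  have hwu : IsUnit w := isUnit_aux hr
  have hyw : y ^ 3 * w = -3 := by
    rw [hy, hw]
    linear_combination (14 * r ^ 2 - 60 * r + 65) * hr
  have hy3 : Ideal.absNorm (Ideal.span {y}) = 3 := by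
    obtain ⟨u, hu⟩ := hwu
    refine absNorm_eq_of_pow (by norm_num) hK (u := -(u⁻¹ : (𝓞 K)ˣ)) (by simp) ?_
    rw [← hu] at hyw
    push_cast
    rw [← mul_right_inj' u.ne_zero]
    linear_combination hyw + 3 * u.mul_inv 
  have hy0 : y ≠ 0 := by
    intro h
    simp [h] at hy3
  set Y : L := algebraMap (𝓞 K) L y with hY
  set W : L := algebraMap (𝓞 K) L w with hW
  have hY0 : Y ≠ 0 := by
    simpa [hY] using hy0
  have hYW : Y ^ 3 * W = -3 := by
    simpa only [map_mul, map_pow, map_neg, map_ofNat] using congrArg (algebraMap (𝓞 K) L) hyw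
  have hYW' : algebraMap (𝓞 L) L (algebraMap (𝓞 K) (𝓞 L) (y * w)) = Y * W := by
    rw [← IsScalarTower.algebraMap_apply, map_mul]
  have hYWint : IsIntegral ℤ (Y * W) := hYW' ▸ RingOfIntegers.isIntegral_coe _
  have hζint : IsIntegral ℤ ζ := ⟨X ^ 2 + X + 1, by monicity!, by simpa using hζ⟩
  have hα2 : ((2 * ζ + 1) / Y) ^ 2 = Y * W := by
    field_simp
    linear_combination 4 * hζ - hYW
  have hπ2 : ((ζ - 1) / Y) ^ 2 = ζ * (Y * W) := by
    field_simp
    linear_combination hζ - ζ * hYW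
  obtain ⟨α, hα⟩ : ∃ α : 𝓞 L, algebraMap (𝓞 L) L α = (2 * ζ + 1) / Y :=
    ⟨⟨_, IsIntegral.of_pow (n := 2) (by norm_num) (hα2 ▸ hYWint)⟩, rfl⟩
  obtain ⟨π, hπ⟩ : ∃ π : 𝓞 L, algebraMap (𝓞 L) L π = (ζ - 1) / Y :=
    ⟨⟨_, IsIntegral.of_pow (n := 2) (by norm_num) (hπ2 ▸ hζint.mul hYWint)⟩, rfl⟩
  have hαsq : α ^ 2 = algebraMap (𝓞 K) (𝓞 L) y * algebraMap (𝓞 K) (𝓞 L) w := by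
    apply RingOfIntegers.coe_injective
    rw [← map_mul, hYW', map_pow, hα, hα2]
  have hNα : Ideal.absNorm (Ideal.span {α}) = 3 := by
    refine absNorm_eq_of_pow (by norm_num) hL (u := -(algebraMap (𝓞 K) (𝓞 L) w) ^ 2)
      ((hwu.map (algebraMap (𝓞 K) (𝓞 L))).pow 2).neg ?_
    have h := congrArg (algebraMap (𝓞 K) (𝓞 L)) hyw
    simp only [map_mul, map_pow, map_neg, map_ofNat] at h
    push_cast
    rw [show α ^ 6 = (α ^ 2) ^ 3 by ring, hαsq]
    linear_combination (algebraMap (𝓞 K) (𝓞 L) w) ^ 2 * h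
  -- `π` generates `L / K`, since `ζ = π * y + 1` is not in `K`.
  have hgen : IntermediateField.adjoin K {algebraMap (𝓞 L) L π} = ⊤ := by
    have := IntermediateField.isSimpleOrder_of_finrank_prime K L (by rw [hKL]; norm_num)
    refine (eq_bot_or_eq_top _).resolve_left fun hbot => ?_
    obtain ⟨x, hx⟩ := IntermediateField.mem_bot.1 (IntermediateField.adjoin_simple_eq_bot_iff.1 hbot)
    refine hζK (x * y + 1) ?_
    rw [map_add, map_mul, map_one, hx, hπ, ← IsScalarTower.algebraMap_apply, ← hY]
    field_simp
    ring
  have hdeg : (minpoly K (algebraMap (𝓞 L) L π)).natDegree = 2 :=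
    ((Field.primitive_element_iff_minpoly_natDegree_eq K _).1 hgen).trans hKL
  have hπint : IsIntegral (𝓞 K) π := Algebra.IsIntegral.isIntegral π
  have hmin : minpoly (𝓞 K) π = X ^ 2 + C (-(y ^ 2 * w)) * X + C (-(y * w)) := by
    have hm : (X ^ 2 + C (-(y ^ 2 * w)) * X + C (-(y * w)) : (𝓞 K)[X]).Monic := by monicity!
    refine (eq_of_monic_of_dvd_of_natDegree_le (minpoly.monic hπint) hm
      (minpoly.isIntegrallyClosed_dvd hπint ?_) ?_).symm
    · apply RingOfIntegers.coe_injective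
      simp only [map_add, map_mul, map_pow, map_neg, aeval_X, aeval_C, hπ,
        ← IsScalarTower.algebraMap_apply, ← hY, ← hW, hπ2, map_zero]
      field_simp
      ring
    · rw [minpoly.isIntegrallyClosed_eq_field_fractions K L hπint,
        (minpoly.monic hπint).natDegree_map] at hdeg
      rw [hdeg]
      compute_degree!
  have hαmem : α ∈ differentIdeal (𝓞 K) (𝓞 L) := by
    have h := aeval_derivative_mem_differentIdeal (𝓞 K) K L π
      (Algebra.adjoin_eq_top_of_primitive_element (Algebra.IsAlgebraic.isAlgebraic _) hgen)
    convert h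
    apply RingOfIntegers.coe_injective
    have hder (s t : 𝓞 K) : derivative (X ^ 2 + C s * X + C t) = C 2 * X + C s := by
      simp [one_add_one_eq_two, map_ofNat (C : 𝓞 K →+* (𝓞 K)[X]) 2]
    rw [hmin, hder]
    simp only [map_add, map_mul, map_pow, map_neg, map_ofNat, aeval_X, aeval_C, hπ, hα,
      ← IsScalarTower.algebraMap_apply, ← hY, ← hW]
    field_simp
    linear_combination hYW
  -- `(α) ^ 2 = (y)` with `(y)` prime, so `(α)` is ramified over `K`.
  have hdvd : Ideal.span {α} ∣ differentIdeal (𝓞 K) (𝓞 L) := by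
    have hprime : (Ideal.span {y}).IsPrime :=
      Ideal.isPrime_of_irreducible_absNorm (by rw [hy3]; exact Nat.prime_three)
    have hne : Ideal.span {y} ≠ ⊥ := by simpa using hy0
    have := hprime.isMaximal hne
    simpa using pow_sub_one_dvd_differentIdeal (𝓞 K) (p := Ideal.span {y}) (Ideal.span {α}) 2 hne (by
      rw [Ideal.map_span, Set.image_singleton, Ideal.span_singleton_pow, hαsq,
        Ideal.span_singleton_mul_right_unit (hwu.map _)])
  have : differentIdeal (𝓞 K) (𝓞 L) = Ideal.span {α} :=
    le_antisymm (Ideal.le_of_dvd hdvd) (by simpa [Ideal.span_le] using hαmem)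
  rw [this, hNα]

/-- The splitting field `E = ℚ(ζ₃, ∛5)` of `x³ − 5`, of degree 6 over `ℚ`,
has absolute discriminant `3⁷ · 5⁴`. -/
theorem abs_discr_splittingField_cubic_five
    (E : Type) [Field E] [NumberField E]
    (hsplit : IsSplittingField ℚ E (X ^ 3 - C 5))
    (hdeg : Module.finrank ℚ E = 6) :
    (NumberField.discr E).natAbs = 3 ^ 7 * 5 ^ 4 := by
  have hcard : Fintype.card ((X ^ 3 - C 5 : ℚ[X]).rootSet E) = 3 := by
    rw [card_rootSet_eq_natDegree (separable_X_pow_sub_C _ (by norm_num) (by norm_num))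
      hsplit.splits, natDegree_X_pow_sub_C]
  obtain ⟨⟨ρ, hρ⟩, ⟨σ, hσ⟩, hne⟩ := Fintype.one_lt_card_iff.1 (by rw [hcard]; norm_num)
  have hroot : ∀ x : E, x ∈ (X ^ 3 - C 5 : ℚ[X]).rootSet E → x ^ 3 = 5 := by
    intro x hx
    have := aeval_eq_zero_of_mem_rootSet hx
    simpa [sub_eq_zero] using this
  replace hρ := hroot ρ hρ
  replace hσ := hroot σ hσ
  have hne' : ρ ≠ σ := fun h => hne (Subtype.ext h)
  have hρ0 : ρ ≠ 0 := by
    rintro rfl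
    norm_num at hρ
  have hζ : (σ / ρ) ^ 2 + σ / ρ + 1 = 0 := by
    have : (σ - ρ) * (σ ^ 2 + σ * ρ + ρ ^ 2) = 0 := by linear_combination hσ - hρ
    have := (mul_eq_zero.1 this).resolve_left (sub_ne_zero.2 hne'.symm)
    field_simp
    linear_combination this
  let K := IntermediateField.adjoin ℚ {ρ}
  have hcub : ρ ^ 3 + (0 : ℤ) * ρ ^ 2 + (0 : ℤ) * ρ + (-5 : ℤ) = 0 := by
    push_cast
    linear_combination hρ
  have hK : Module.finrank ℚ K = 3 := by
    rw [IntermediateField.adjoin.finrank (Algebra.IsIntegral.isIntegral ρ)]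
    exact natDegree_minpoly_rat_cubic (p := 5) (by norm_num)
      (by norm_num) (by norm_num) (by norm_num) (by norm_num) hcub
  let g : K := IntermediateField.AdjoinSimple.gen ℚ ρ
  have hg : g ^ 3 = 5 := Subtype.ext hρ
  obtain ⟨r, hr⟩ : ∃ r : 𝓞 K, algebraMap (𝓞 K) K r = g :=
    ⟨⟨g, X ^ 3 - C 5, by monicity!, by simp [hg]⟩, rfl⟩
  have hr3 : r ^ 3 = 5 := by
    apply RingOfIntegers.coe_injective
    rw [map_pow, hr, hg, map_ofNat]
  have hKE : Module.finrank K E = 2 := by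
    have := Module.finrank_mul_finrank ℚ K E
    rw [hK, hdeg] at this
    omega
  rw [natAbs_discr_eq_absNorm_differentIdeal_mul_natAbs_discr_pow K (𝓞 K) E (𝓞 E),
    absNorm_differentIdeal_sextic hK hdeg hr3 hζ, natAbs_discr_cubic hK hr3, hKE]
  norm_num
end
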